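/- arXiv:0910.3118 — 11 statements merged into one kernel-verified Lean document; each statement's English description precedes it below -/
import Mathlib

section
/- Let g : V → ℝ be a function whose support set S(g) := {i ∈ V : g(i) > 0} is nonempty. Define h(g) := min over nonempty subsets S ⊆ S(g) of |E(S, V∖S)|/vol(S), and let g₊ : V → ℝ be the positive part of g, i.e. g₊(i) = g(i) if g(i) > 0 and g₊(i) = 0 otherwise. Then 1 + √(1 − h(g)²) ≥ ( (1/2)·∑_{i,j∈V} w_{ij}(g₊(i) − g₊(j))² ) / ( ∑_{i∈V} d_i g₊(i)² ) ≥ 1 − √(1 − h(g)²). (Here 0 ≤ h(g) ≤ 1 holds automatically, and the denominator is positive since S(g) ≠ ∅.) -/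
open Finset

noncomputable section

namespace BJ

variable {V : Type*} [Fintype V] [DecidableEq V]

/-- The degree `d_i = ∑_j w_ij` of a vertex. -/
def deg (w : V → V → ℝ) (i : V) : ℝ := ∑ j, w i j

/-- The volume `vol(A) = ∑_{i ∈ A} d_i` of a vertex subset. -/
def vol (w : V → V → ℝ) (A : Finset V) : ℝ := ∑ i ∈ A, deg w i

/-- The total edge weight `|E(A,B)| = ∑_{i ∈ A, j ∈ B} w_ij` between two vertex subsets. -/
def eW (w : V → V → ℝ) (A B : Finset V) : ℝ := ∑ i ∈ A, ∑ j ∈ B, w i j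

/-- The normalized graph Laplacian `(Δu)(i) = u(i) - (1/d_i) ∑_j w_ij u(j)`. -/
def lap (w : V → V → ℝ) (u : V → ℝ) (i : V) : ℝ :=
  u i - (1 / deg w i) * ∑ j, w i j * u j

/-- `lam` is an eigenvalue of the normalized graph Laplacian. -/
def IsEigen (w : V → V → ℝ) (lam : ℝ) : Prop :=
  ∃ u : V → ℝ, u ≠ 0 ∧ ∀ i, lap w u i = lam * u i

/-- The weighted graph is connected: any two vertices are joined by a chain of
positive-weight edges. -/
def Conn (w : V → V → ℝ) : Prop :=
  ∀ i j : V, Relation.ReflTransGen (fun a b => 0 < w a b) i j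

/-- The weighted graph is bipartite: the vertex set splits into two nonempty classes with
no edges inside a class. -/
def Bipartite (w : V → V → ℝ) : Prop :=
  ∃ A : Finset V, A.Nonempty ∧ Aᶜ.Nonempty ∧
    (∀ i ∈ A, ∀ j ∈ A, w i j = 0) ∧ (∀ i ∈ Aᶜ, ∀ j ∈ Aᶜ, w i j = 0)

/-- The Cheeger constant
`h = min { |E(U,Uᶜ)| / vol(U) : ∅ ≠ U ⊊ V, vol(U) ≤ vol(V)/2 }`. -/
def cheeger (w : V → V → ℝ) : ℝ :=
  sInf { r : ℝ | ∃ U : Finset V, U.Nonempty ∧ U ≠ Finset.univ ∧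
    vol w U ≤ vol w Finset.univ / 2 ∧ r = eW w U Uᶜ / vol w U }

/-- The dual Cheeger constant
`h̄ = max { 2|E(V₁,V₂)| / (vol(V₁)+vol(V₂)) }` over pairs of disjoint nonempty vertex sets
`V₁, V₂` (the third class `V₃` of the partition being the complement of `V₁ ∪ V₂`). -/
def dualCheeger (w : V → V → ℝ) : ℝ :=
  sSup { r : ℝ | ∃ V1 V2 : Finset V, V1.Nonempty ∧ V2.Nonempty ∧ Disjoint V1 V2 ∧
    r = 2 * eW w V1 V2 / (vol w V1 + vol w V2) }

/-- The weights of the neighborhood graph `Γ[l]`: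
`w_ij[l] = ∑_{k₁,…,k_{l-1}} w_{i k₁} w_{k₁ k₂} ⋯ w_{k_{l-1} j} / (d_{k₁} ⋯ d_{k_{l-1}})`,
defined recursively (as a matrix, `wl w l = D ⬝ P^l`; in particular `wl w 1 = w`). -/
def wl (w : V → V → ℝ) : ℕ → V → V → ℝ
  | 0 => fun i j => if i = j then deg w i else 0
  | n + 1 => fun i j => ∑ k, wl w n i k * w k j / deg w k

lemma eW_eq_half (w : V → V → ℝ) (hsym : ∀ i j, w i j = w j i) (S : Finset V) :
    (1 / 2) * ∑ i, ∑ j, w i j * |(if i ∈ S then (1:ℝ) else 0) - (if j ∈ S then 1 else 0)|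
      = eW w S Sᶜ := by
  have h1 : ∀ A B : Finset V, eW w A B
      = ∑ i, ∑ j, w i j * ((if i ∈ A then (1:ℝ) else 0) * (if j ∈ B then 1 else 0)) := by
    intro A B
    unfold eW
    rw [← Finset.sum_filter_add_sum_filter_not univ (fun i => i ∈ A)]
    have e2 : ∑ x ∈ univ.filter (fun i => ¬ i ∈ A), ∑ j, w x j *
        ((if x ∈ A then (1:ℝ) else 0) * (if j ∈ B then 1 else 0)) = 0 := by
      apply Finset.sum_eq_zero
      intro i hi
      have hi' : i ∉ A := by simpa using hi
      simp [hi']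
    rw [e2, add_zero]
    have e3 : univ.filter (fun i => i ∈ A) = A := by ext; simp
    rw [e3]
    apply Finset.sum_congr rfl
    intro i hi
    simp [hi]
  have h2 : eW w S Sᶜ = eW w Sᶜ S := by
    unfold eW
    rw [Finset.sum_comm]
    exact Finset.sum_congr rfl fun i _ => Finset.sum_congr rfl fun j _ => hsym _ _
  have h3 : ∑ i, ∑ j, w i j * |(if i ∈ S then (1:ℝ) else 0) - (if j ∈ S then 1 else 0)|
      = eW w S Sᶜ + eW w Sᶜ S := by
    rw [h1, h1, ← Finset.sum_add_distrib]
    apply Finset.sum_congr rfl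
    intro i _
    rw [← Finset.sum_add_distrib]
    apply Finset.sum_congr rfl
    intro j _
    by_cases hi : i ∈ S <;> by_cases hj : j ∈ S <;> simp [hi, hj]
  rw [h3, ← h2]; ring

lemma coarea (w : V → V → ℝ) (hsym : ∀ i j, w i j = w j i) (g : V → ℝ) (h : ℝ)
    (P : ∀ S : Finset V, S.Nonempty → (∀ i ∈ S, 0 < g i) → h * vol w S ≤ eW w S Sᶜ) :
    ∀ n : ℕ, ∀ f : V → ℝ, (∀ i, 0 ≤ f i) → (∀ i, 0 < f i → 0 < g i) →
      (univ.filter (fun i => 0 < f i)).card ≤ n →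
      h * ∑ i, deg w i * f i ≤ (1 / 2) * ∑ i, ∑ j, w i j * |f i - f j| := by
  intro n
  induction n with
  | zero =>
    intro f hf _ hc
    have : ∀ i, f i = 0 := by
      intro i
      by_contra hne
      have hi : i ∈ univ.filter (fun i => 0 < f i) := by
        simpa using lt_of_le_of_ne (hf i) (Ne.symm hne)
      have := Finset.card_pos.2 ⟨i, hi⟩
      omega
    simp [this]
  | succ n ih =>
    intro f hf hfg hc
    set T := univ.filter (fun i => 0 < f i) with hT
    have memT : ∀ i, i ∈ T ↔ 0 < f i := by intro i; simp [hT]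
    by_cases hne : T.Nonempty
    · obtain ⟨k, hk, hmin⟩ := Finset.exists_min_image T f hne
      have hkp := (memT k).1 hk
      set m := f k with hm
      set c : V → ℝ := fun i => if i ∈ T then (1:ℝ) else 0 with hcdef
      have hc1 : ∀ i, i ∈ T → c i = 1 := fun i hi => by simp [hcdef, hi]
      have hc0 : ∀ i, i ∉ T → c i = 0 := fun i hi => by simp [hcdef, hi]
      have hf0 : ∀ i, i ∉ T → f i = 0 := fun i hi =>
        le_antisymm (not_lt.1 fun h => hi ((memT i).2 h)) (hf i)
      have f'nn : ∀ i, 0 ≤ f i - m * c i := by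
        intro i
        by_cases hi : i ∈ T
        · rw [hc1 i hi]; linarith [hmin i hi]
        · rw [hc0 i hi, hf0 i hi]; simp
      have f'le : ∀ i, 0 < f i - m * c i → i ∈ T := by
        intro i hi
        by_contra hi'
        rw [hc0 i hi', hf0 i hi'] at hi
        simp at hi
      have key := ih (fun i => f i - m * c i) f'nn
        (fun i hi => hfg i ((memT i).1 (f'le i hi))) (by
          have hss : univ.filter (fun i => 0 < f i - m * c i) ⊂ T := by
            refine Finset.ssubset_iff_subset_ne.2 ⟨fun i hi => f'le i (by simpa using hi), ?_⟩
            intro he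
            have : k ∈ univ.filter (fun i => 0 < f i - m * c i) := by rw [he]; exact hk
            simp [hc1 k hk, ← hm] at this
          have := Finset.card_lt_card hss
          omega)
      have hP := P T hne (fun i hi => hfg i ((memT i).1 hi))
      rw [← eW_eq_half w hsym T] at hP
      have hv : vol w T = ∑ i, deg w i * c i := by
        simp [vol, hcdef]
      have e1 : ∑ i, deg w i * f i
          = ∑ i, deg w i * (f i - m * c i) + m * vol w T := by
        rw [hv, Finset.mul_sum, ← Finset.sum_add_distrib]
        exact Finset.sum_congr rfl fun i _ => by ring
      have e2 : ∑ i, ∑ j, w i j * |f i - f j|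
          = ∑ i, ∑ j, w i j * |(f i - m * c i) - (f j - m * c j)|
            + m * ∑ i, ∑ j, w i j * |c i - c j| := by
        rw [Finset.mul_sum, ← Finset.sum_add_distrib]
        refine Finset.sum_congr rfl fun i _ => ?_
        rw [Finset.mul_sum, ← Finset.sum_add_distrib]
        refine Finset.sum_congr rfl fun j _ => ?_
        have : |f i - f j| = |(f i - m * c i) - (f j - m * c j)| + m * |c i - c j| := by
          by_cases hi : i ∈ T <;> by_cases hj : j ∈ T
          · rw [hc1 i hi, hc1 j hj]; simp
          · rw [hc1 i hi, hc0 j hj, hf0 j hj]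
            have := hmin i hi
            rw [abs_of_nonneg (by linarith [hf i]), abs_of_nonneg (by linarith)]
            simp
          · rw [hc0 i hi, hc1 j hj, hf0 i hi]
            have := hmin j hj
            rw [abs_of_nonpos (by linarith [hf j]), abs_of_nonpos (by linarith)]
            simp
          · rw [hc0 i hi, hc0 j hj, hf0 i hi, hf0 j hj]; simp
        rw [this]; ring
      have hP' : h * vol w T ≤ 1 / 2 * ∑ i, ∑ j, w i j * |c i - c j| := hP
      have := mul_le_mul_of_nonneg_left hP' hkp.le
      rw [e1, e2]
      linarith
    · apply ih f hf hfg
      rw [← hT, Finset.not_nonempty_iff_eq_empty.1 hne]; simp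

/-- Lemma 1: the key Cheeger-type lemma.
For `g` with nonempty support `S(g) = {i : g(i) > 0}`, with
`h(g) = min_{∅ ≠ S ⊆ S(g)} |E(S,Sᶜ)|/vol(S)` and `g₊` the positive part of `g`,
`1 + √(1 - h(g)²) ≥ (½ ∑_{i,j} w_ij (g₊(i)-g₊(j))²) / (∑_i d_i g₊(i)²) ≥ 1 - √(1 - h(g)²)`. -/
theorem rayleigh_of_positive_part_bounds
    (w : V → V → ℝ)
    (hsym : ∀ i j, w i j = w j i) (hnn : ∀ i j, 0 ≤ w i j)
    (hdeg : ∀ i, 0 < deg w i) (hconn : Conn w) (hN : 2 ≤ Fintype.card V)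
    (g : V → ℝ) (hSg : ∃ i, 0 < g i)
    (hg : ℝ)
    (hhg : hg = sInf { r : ℝ | ∃ S : Finset V, S.Nonempty ∧ (∀ i ∈ S, 0 < g i) ∧
        r = eW w S Sᶜ / vol w S })
    (gp : V → ℝ) (hgp : ∀ i, gp i = max (g i) 0) :
    1 - Real.sqrt (1 - hg ^ 2) ≤
        ((1 / 2) * ∑ i, ∑ j, w i j * (gp i - gp j) ^ 2) / (∑ i, deg w i * gp i ^ 2) ∧
      ((1 / 2) * ∑ i, ∑ j, w i j * (gp i - gp j) ^ 2) / (∑ i, deg w i * gp i ^ 2) ≤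
        1 + Real.sqrt (1 - hg ^ 2) := by
  have hne : ({ r : ℝ | ∃ S : Finset V, S.Nonempty ∧ (∀ i ∈ S, 0 < g i) ∧
        r = eW w S Sᶜ / vol w S }).Nonempty := by
    obtain ⟨i, hi⟩ := hSg
    exact ⟨_, {i}, by simp, by simpa using hi, rfl⟩
  have volpos : ∀ S : Finset V, S.Nonempty → 0 < vol w S := fun S hS =>
    Finset.sum_pos (fun i _ => hdeg i) hS
  have lb : ∀ r ∈ { r : ℝ | ∃ S : Finset V, S.Nonempty ∧ (∀ i ∈ S, 0 < g i) ∧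
        r = eW w S Sᶜ / vol w S }, 0 ≤ r := by
    rintro r ⟨S, hS, _, rfl⟩
    exact div_nonneg (Finset.sum_nonneg fun i _ => Finset.sum_nonneg fun j _ => hnn i j)
      (volpos S hS).le
  have h0 : 0 ≤ hg := by rw [hhg]; exact Real.sInf_nonneg lb
  have P : ∀ S : Finset V, S.Nonempty → (∀ i ∈ S, 0 < g i) →
      hg * vol w S ≤ eW w S Sᶜ := by
    intro S hS hSg'
    rw [← le_div_iff₀ (volpos S hS), hhg]
    exact csInf_le ⟨0, lb⟩ ⟨S, hS, hSg', rfl⟩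
  have gnn : ∀ i, 0 ≤ gp i := fun i => by rw [hgp]; exact le_max_right _ _
  have co := coarea w hsym g hg P _ (fun i => gp i ^ 2) (fun i => sq_nonneg _) (by
    intro i hi
    by_contra hn
    have : gp i = 0 := by rw [hgp]; exact max_eq_right (not_lt.1 hn)
    simp [this] at hi) le_rfl
  set D := ∑ i, deg w i * gp i ^ 2 with hD
  have Dpos : 0 < D := by
    obtain ⟨i, hi⟩ := hSg
    apply Finset.sum_pos' (fun i _ => mul_nonneg (hdeg i).le (sq_nonneg _))
    refine ⟨i, mem_univ _, mul_pos (hdeg i) (pow_pos ?_ 2)⟩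
    rw [hgp]; exact lt_max_of_lt_left hi
  set A := ∑ i, ∑ j, w i j * (gp i - gp j) ^ 2 with hA
  set B := ∑ i, ∑ j, w i j * (gp i + gp j) ^ 2 with hB
  set C := ∑ i, ∑ j, w i j * |gp i ^ 2 - gp j ^ 2| with hC
  have d1 : ∑ i, ∑ j, w i j * gp i ^ 2 = D := by
    rw [hD]
    exact Finset.sum_congr rfl fun i _ => by rw [deg, Finset.sum_mul]
  have d2 : ∑ i, ∑ j, w i j * gp j ^ 2 = D := by
    rw [Finset.sum_comm, ← d1]
    exact Finset.sum_congr rfl fun i _ => Finset.sum_congr rfl fun j _ => by rw [hsym]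
  have hAB : A + B = 4 * D := by
    have : A + B = 2 * ∑ i, ∑ j, w i j * gp i ^ 2 + 2 * ∑ i, ∑ j, w i j * gp j ^ 2 := by
      simp only [hA, hB, Finset.mul_sum, ← Finset.sum_add_distrib]
      exact Finset.sum_congr rfl fun i _ => Finset.sum_congr rfl fun j _ => by ring
    rw [this, d1, d2]; ring
  have CS : C ^ 2 ≤ A * B := by
    simp only [hA, hB, hC, ← Fintype.sum_prod_type']
    apply Finset.sum_sq_le_sum_mul_sum_of_sq_eq_mul
    · exact fun x _ => mul_nonneg (hnn _ _) (sq_nonneg _)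
    · exact fun x _ => mul_nonneg (hnn _ _) (sq_nonneg _)
    · intro x _
      rw [mul_pow, sq_abs]; ring
  have hsq : (hg * D) ^ 2 ≤ (1 / 2 * C) ^ 2 :=
    pow_le_pow_left₀ (mul_nonneg h0 Dpos.le) co 2
  have hB' : B = 4 * D - A := by linarith
  rw [hB'] at CS
  have fin : (1 / 2 * A / D - 1) ^ 2 ≤ 1 - hg ^ 2 := by
    have : (1 / 2 * A / D - 1) ^ 2 = (1 / 2 * A - D) ^ 2 / D ^ 2 := by
      field_simp
    rw [this, div_le_iff₀ (by positivity)]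
    nlinarith
  have := abs_le.1 (Real.abs_le_sqrt fin)
  constructor <;> linarith [this.1, this.2]

end BJ
end
end

section
/- Let λ ≥ 0 be a real number and let g : V → ℝ be a function whose support set S(g) := {i ∈ V : g(i) > 0} is nonempty, and let g₊ be the positive part of g (g₊(i) = g(i) if g(i) > 0, else 0). If (Δg)(i) ≤ λ·g(i) for every i ∈ S(g), then λ ≥ ( (1/2)·∑_{i,j∈V} w_{ij}(g₊(i) − g₊(j))² ) / ( ∑_{i∈V} d_i g₊(i)² ). -/
open Finset

noncomputable section

namespace BJ

variable {V : Type*} [Fintype V] [DecidableEq V]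

/-- Lemma 2.
If `λ ≥ 0` and `(Δg)(i) ≤ λ g(i)` on the (nonempty) support `S(g) = {i : g(i) > 0}`,
then `λ ≥ (½ ∑_{i,j} w_ij (g₊(i)-g₊(j))²) / (∑_i d_i g₊(i)²)`, where `g₊` is the
positive part of `g`. -/
theorem rayleigh_of_positive_part_le_lambda
    (w : V → V → ℝ)
    (hsym : ∀ i j, w i j = w j i) (hnn : ∀ i j, 0 ≤ w i j)
    (hdeg : ∀ i, 0 < deg w i) (hconn : Conn w) (hN : 2 ≤ Fintype.card V)
    (lam : ℝ) (hlam : 0 ≤ lam)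
    (g : V → ℝ) (hSg : ∃ i, 0 < g i)
    (gp : V → ℝ) (hgp : ∀ i, gp i = max (g i) 0)
    (hsub : ∀ i, 0 < g i → lap w g i ≤ lam * g i) :
    ((1 / 2) * ∑ i, ∑ j, w i j * (gp i - gp j) ^ 2) / (∑ i, deg w i * gp i ^ 2) ≤ lam := by
  have hpos : 0 < ∑ i, deg w i * gp i ^ 2 := by
    obtain ⟨k, hk⟩ := hSg
    refine Finset.sum_pos' (fun i _ => mul_nonneg (hdeg i).le (sq_nonneg _))
      ⟨k, Finset.mem_univ k, ?_⟩
    have : 0 < gp k := by rw [hgp]; exact lt_max_of_lt_left hk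
    exact mul_pos (hdeg k) (pow_pos this 2)
  rw [div_le_iff₀ hpos]
  have hswap : ∑ i, ∑ j, w i j * (gp i * (gp i - gp j))
      = ∑ i, ∑ j, w i j * (gp j * (gp j - gp i)) := by
    rw [Finset.sum_comm]
    refine Finset.sum_congr rfl fun i _ => Finset.sum_congr rfl fun j _ => ?_
    rw [hsym j i]
  have hsum : ∑ i, ∑ j, w i j * (gp i - gp j) ^ 2
      = ∑ i, ∑ j, w i j * (gp i * (gp i - gp j))
        + ∑ i, ∑ j, w i j * (gp j * (gp j - gp i)) := by
    rw [← Finset.sum_add_distrib]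
    refine Finset.sum_congr rfl fun i _ => ?_
    rw [← Finset.sum_add_distrib]
    refine Finset.sum_congr rfl fun j _ => ?_
    ring
  rw [hsum, ← hswap]
  have key : ∑ i, ∑ j, w i j * (gp i * (gp i - gp j)) ≤ lam * ∑ i, deg w i * gp i ^ 2 := by
    rw [Finset.mul_sum]
    refine Finset.sum_le_sum fun i _ => ?_
    by_cases hi : 0 < g i
    · have hgi : gp i = g i := by rw [hgp]; exact max_eq_left hi.le
      have h1 := hsub i hi
      have hd := hdeg i
      have h2 : deg w i * lap w g i ≤ deg w i * (lam * g i) :=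
        mul_le_mul_of_nonneg_left h1 hd.le
      have h3 : deg w i * lap w g i = deg w i * g i - ∑ j, w i j * g j := by
        unfold lap; field_simp
      have h4 : ∑ j, w i j * g j ≤ ∑ j, w i j * gp j := by
        refine Finset.sum_le_sum fun j _ => mul_le_mul_of_nonneg_left ?_ (hnn i j)
        rw [hgp]; exact le_max_left _ _
      have h5 : ∑ j, w i j * (gp i * (gp i - gp j))
          = gp i * (deg w i * gp i - ∑ j, w i j * gp j) := by
        unfold deg
        rw [Finset.sum_mul, ← Finset.sum_sub_distrib, Finset.mul_sum]
        refine Finset.sum_congr rfl fun j _ => ?_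
        ring
      rw [h5, hgi]
      have h6 : deg w i * g i - ∑ j, w i j * gp j ≤ deg w i * (lam * g i) := by linarith
      have := mul_le_mul_of_nonneg_left h6 hi.le
      linarith
    · have hgi : gp i = 0 := by rw [hgp]; exact max_eq_right (not_lt.mp hi)
      simp [hgi]
  linarith

end BJ
end
end

section
/- The dual Cheeger constant satisfies h̄ ≤ 1, and h̄ = 1 if and only if Γ is bipartite. -/
open Finset

noncomputable section

namespace BJ

variable {V : Type*} [Fintype V] [DecidableEq V]

lemma eW_add_compl (w : V → V → ℝ) (A B : Finset V) : eW w A B + eW w A Bᶜ = vol w A := by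
  unfold eW vol deg
  rw [← Finset.sum_add_distrib]
  exact Finset.sum_congr rfl fun i _ => Finset.sum_add_sum_compl B _

lemma eW_symm (w : V → V → ℝ) (hsym : ∀ i j, w i j = w j i) (A B : Finset V) :
    eW w A B = eW w B A := by
  unfold eW
  rw [Finset.sum_comm]
  exact Finset.sum_congr rfl fun i _ => Finset.sum_congr rfl fun j _ => hsym j i

lemma eW_nonneg (w : V → V → ℝ) (hnn : ∀ i j, 0 ≤ w i j) (A B : Finset V) : 0 ≤ eW w A B :=
  Finset.sum_nonneg fun i _ => Finset.sum_nonneg fun j _ => hnn i j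

lemma eW_eq_zero (w : V → V → ℝ) (hnn : ∀ i j, 0 ≤ w i j) (A B : Finset V) :
    eW w A B = 0 ↔ ∀ i ∈ A, ∀ j ∈ B, w i j = 0 := by
  unfold eW
  rw [Finset.sum_eq_zero_iff_of_nonneg fun i _ => Finset.sum_nonneg fun j _ => hnn i j]
  refine forall₂_congr fun i _ => ?_
  rw [Finset.sum_eq_zero_iff_of_nonneg fun j _ => hnn i j]

/-- Theorem: dual Cheeger constant characterizes bipartiteness.
The dual Cheeger constant satisfies `h̄ ≤ 1`, and `h̄ = 1` iff `Γ` is bipartite. -/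
theorem dualCheeger_le_one_and_eq_one_iff_bipartite
    (w : V → V → ℝ)
    (hsym : ∀ i j, w i j = w j i) (hnn : ∀ i j, 0 ≤ w i j)
    (hdeg : ∀ i, 0 < deg w i) (hconn : Conn w) (hN : 2 ≤ Fintype.card V) :
    dualCheeger w ≤ 1 ∧ (dualCheeger w = 1 ↔ Bipartite w) := by
  have hpos : ∀ A : Finset V, A.Nonempty → 0 < vol w A := fun A hA =>
    Finset.sum_pos (fun i _ => hdeg i) hA
  have key : ∀ A B : Finset V, vol w A + vol w B = 2 * eW w A B + eW w A Bᶜ + eW w B Aᶜ := by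
    intro A B
    have h1 := eW_add_compl w A B
    have h2 := eW_add_compl w B A
    have h3 := eW_symm w hsym A B
    linarith
  set S := { r : ℝ | ∃ V1 V2 : Finset V, V1.Nonempty ∧ V2.Nonempty ∧ Disjoint V1 V2 ∧
    r = 2 * eW w V1 V2 / (vol w V1 + vol w V2) } with hS
  have hd : dualCheeger w = sSup S := rfl
  have hub : ∀ r ∈ S, r ≤ 1 := by
    rintro r ⟨A, B, hA, hB, -, rfl⟩
    rw [div_le_one (add_pos (hpos A hA) (hpos B hB))]
    have := key A B
    have := eW_nonneg w hnn A Bᶜ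
    have := eW_nonneg w hnn B Aᶜ
    linarith
  have hfin : S.Finite := by
    refine (Set.finite_range fun p : Finset V × Finset V =>
      2 * eW w p.1 p.2 / (vol w p.1 + vol w p.2)).subset ?_
    rintro r ⟨A, B, -, -, -, rfl⟩
    exact ⟨(A, B), rfl⟩
  have hne : S.Nonempty := by
    obtain ⟨a, b, hab⟩ := Fintype.one_lt_card_iff.1 (show 1 < Fintype.card V from hN)
    exact ⟨_, {a}, {b}, by simp, by simp, by simpa using hab, rfl⟩
  have hle : sSup S ≤ 1 := csSup_le hne hub
  rw [hd]
  refine ⟨hle, ?_, ?_⟩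
  · intro h1
    have hm := hne.csSup_mem hfin
    rw [h1] at hm
    obtain ⟨A, B, hA, hB, hAB, h⟩ := hm
    rw [eq_div_iff (add_pos (hpos A hA) (hpos B hB)).ne'] at h
    have h2 := key A B
    have h3 := eW_nonneg w hnn A Bᶜ
    have h4 := eW_nonneg w hnn B Aᶜ
    have h5 := (eW_eq_zero w hnn A Bᶜ).1 (by linarith)
    have h6 := (eW_eq_zero w hnn B Aᶜ).1 (by linarith)
    have hall : ∀ j, j ∈ A ∨ j ∈ B := by
      intro j
      obtain ⟨a, ha⟩ := hA
      induction hconn a j with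
      | refl => exact Or.inl ha
      | tail _ hbc ih =>
        by_contra hc
        push Not at hc
        rcases ih with ih | ih
        · exact hbc.ne' (h5 _ ih _ (by simpa using hc.2))
        · exact hbc.ne' (h6 _ ih _ (by simpa using hc.1))
    have hc : Aᶜ = B := by
      ext j
      have := hall j
      have h7 : j ∈ A → j ∉ B := fun h => Finset.disjoint_left.1 hAB h
      rw [Finset.mem_compl]
      tauto
    refine ⟨A, hA, hc ▸ hB, ?_, ?_⟩
    · intro i hi j hj
      exact h5 i hi j (by rw [← hc]; simpa using hj)
    · intro i hi j hj
      exact h6 i (hc ▸ hi) j hj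
  · rintro ⟨A, hA, hB, h1, h2⟩
    refine le_antisymm hle (le_csSup ⟨1, hub⟩ ⟨A, Aᶜ, hA, hB, disjoint_compl_right, ?_⟩)
    rw [eq_div_iff (add_pos (hpos A hA) (hpos _ hB)).ne', key]
    have h3 := (eW_eq_zero w hnn A Aᶜᶜ).2 (by simpa using h1)
    have h4 := (eW_eq_zero w hnn Aᶜ Aᶜ).2 h2
    rw [h3, h4]
    ring

end BJ
end
end

section
/- If Γ is loopless, i.e. w_{ii} = 0 for every vertex i ∈ V, then the dual Cheeger constant satisfies 1/2 ≤ h̄. -/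
open Finset

noncomputable section

namespace BJ

variable {V : Type*} [Fintype V] [DecidableEq V]

lemma exists_cut (w : V → V → ℝ) (hsym : ∀ i j, w i j = w j i)
    (hloop : ∀ i, w i i = 0) (S : Finset V) :
    ∃ A B : Finset V, Disjoint A B ∧ A ∪ B = S ∧ eW w S S ≤ 4 * eW w A B := by
  induction S using Finset.induction_on with
  | empty => exact ⟨∅, ∅, by simp, by simp, by simp [eW]⟩
  | insert a S ha ih =>
    obtain ⟨A, B, hd, hu, h⟩ := ih
    have haA : a ∉ A := fun h => ha (hu ▸ Finset.mem_union_left _ h)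
    have haB : a ∉ B := fun h => ha (hu ▸ Finset.mem_union_right _ h)
    have hS : eW w (insert a S) (insert a S) = eW w S S + 2 * ∑ j ∈ S, w a j := by
      have : ∑ i ∈ S, w i a = ∑ i ∈ S, w a i := Finset.sum_congr rfl fun i _ => hsym i a
      simp only [eW, Finset.sum_insert ha, Finset.sum_add_distrib, hloop, this]
      ring
    have hsplit : ∑ j ∈ S, w a j = ∑ j ∈ A, w a j + ∑ j ∈ B, w a j := by
      rw [← hu, Finset.sum_union hd]
    rcases le_total (∑ j ∈ A, w a j) (∑ j ∈ B, w a j) with hle | hle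
    · refine ⟨insert a A, B, by simp [haB, hd], by rw [Finset.insert_union, hu], ?_⟩
      have : eW w (insert a A) B = eW w A B + ∑ j ∈ B, w a j := by
        simp only [eW, Finset.sum_insert haA]
        ring
      linarith
    · refine ⟨A, insert a B, by simp [haA, hd], by rw [Finset.union_insert, hu], ?_⟩
      have h2 : ∑ i ∈ A, w i a = ∑ i ∈ A, w a i := Finset.sum_congr rfl fun i _ => hsym i a
      have : eW w A (insert a B) = eW w A B + ∑ j ∈ A, w a j := by
        simp only [eW, Finset.sum_insert haB, Finset.sum_add_distrib, h2]
        ring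
      linarith

/-- Proposition: lower bound for the dual Cheeger constant.
For a loopless graph (`w_ii = 0` for all `i`), `1/2 ≤ h̄`. -/
theorem one_half_le_dualCheeger_of_loopless
    (w : V → V → ℝ)
    (hsym : ∀ i j, w i j = w j i) (hnn : ∀ i j, 0 ≤ w i j)
    (hdeg : ∀ i, 0 < deg w i) (hconn : Conn w) (hN : 2 ≤ Fintype.card V)
    (hloop : ∀ i, w i i = 0) :
    1 / 2 ≤ dualCheeger w := by
  obtain ⟨A, B, hd, hu, h⟩ := exists_cut w hsym hloop Finset.univ
  have hvol : eW w Finset.univ Finset.univ = vol w A + vol w B := by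
    rw [vol, vol, ← Finset.sum_union hd, hu]
    rfl
  have hpos : 0 < eW w Finset.univ Finset.univ := by
    have : Nonempty V := Fintype.card_pos_iff.mp (by omega)
    exact Finset.sum_pos (fun i _ => hdeg i) Finset.univ_nonempty
  have hA : A.Nonempty := by
    by_contra hA
    rw [Finset.not_nonempty_iff_eq_empty] at hA
    have : eW w A B = 0 := by simp [hA, eW]
    linarith
  have hB : B.Nonempty := by
    by_contra hB
    rw [Finset.not_nonempty_iff_eq_empty] at hB
    have : eW w A B = 0 := by simp [hB, eW]
    linarith
  have hbdd : BddAbove { r : ℝ | ∃ V1 V2 : Finset V, V1.Nonempty ∧ V2.Nonempty ∧ Disjoint V1 V2 ∧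
      r = 2 * eW w V1 V2 / (vol w V1 + vol w V2) } := by
    refine ⟨2, ?_⟩
    rintro r ⟨V1, V2, h1, h2, -, rfl⟩
    have p1 : 0 < vol w V1 := Finset.sum_pos (fun i _ => hdeg i) h1
    have p2 : 0 < vol w V2 := Finset.sum_pos (fun i _ => hdeg i) h2
    have hle : eW w V1 V2 ≤ vol w V1 := Finset.sum_le_sum fun i _ =>
      Finset.sum_le_sum_of_subset_of_nonneg (Finset.subset_univ _) fun j _ _ => hnn i j
    rw [div_le_iff₀ (by linarith)]
    linarith
  refine le_trans ?_ (le_csSup hbdd ⟨A, B, hA, hB, hd, rfl⟩)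
  rw [le_div_iff₀ (by linarith)]
  linarith

end BJ
end
end

section
/- The largest eigenvalue λ_{N−1} of the normalized graph Laplacian Δ satisfies 2·h̄ ≤ λ_{N−1} ≤ 1 + √(1 − (1 − h̄)²). -/
open Finset

noncomputable section

namespace BJ

variable {V : Type*} [Fintype V] [DecidableEq V]

lemma layer {ι : Type*} (s : Finset ι) (c y : ι → ℝ) (hy : ∀ k, 0 ≤ y k)
    (h : ∀ t : ℝ, 0 ≤ t → 0 ≤ ∑ k ∈ s, c k * (if t < y k then 1 else 0)) :
    0 ≤ ∑ k ∈ s, c k * y k := by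
  have hi : ∀ k, MeasureTheory.Integrable
      ((Set.Ico (0:ℝ) (y k)).indicator (fun _ => (1:ℝ))) := by
    intro k
    rw [MeasureTheory.integrable_indicator_iff measurableSet_Ico]
    simp
  have e : ∑ k ∈ s, c k * y k
      = ∫ t, ∑ k ∈ s, c k * (Set.Ico (0:ℝ) (y k)).indicator (fun _ => (1:ℝ)) t := by
    rw [MeasureTheory.integral_finsetSum]
    · refine Finset.sum_congr rfl fun k _ => ?_
      rw [MeasureTheory.integral_const_mul,
        MeasureTheory.integral_indicator measurableSet_Ico]
      simp [hy k]
    · intro k _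
      exact (hi k).const_mul _
  rw [e]
  refine MeasureTheory.integral_nonneg fun t => ?_
  by_cases ht : 0 ≤ t
  · have := h t ht
    simpa [Set.indicator_apply, ht] using this
  · simp [Set.indicator_apply, ht]

lemma rayleigh (w : V → V → ℝ) (hsym : ∀ i j, w i j = w j i)
    (hdeg : ∀ i, 0 < deg w i) (lam : ℝ) (hmax : ∀ μ, IsEigen w μ → μ ≤ lam) (u : V → ℝ) :
    0 ≤ (lam - 1) * ∑ i, deg w i * u i ^ 2 + ∑ i, ∑ j, w i j * (u i * u j) := by
  obtain ⟨s, hs, hs2⟩ : ∃ s : V → ℝ, (∀ i, 0 < s i) ∧ ∀ i, s i * s i = deg w i :=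
    ⟨fun i => Real.sqrt (deg w i), fun i => Real.sqrt_pos.2 (hdeg i),
      fun i => Real.mul_self_sqrt (hdeg i).le⟩
  set A : Matrix V V ℝ :=
    Matrix.of fun i j => (if i = j then lam - 1 else 0) + w i j / (s i * s j) with hA
  have hmul : ∀ (x : V → ℝ) i, (A.mulVec x) i = (lam - 1) * x i + ∑ j, w i j / (s i * s j) * x j := by
    intro x i
    simp [hA, Matrix.mulVec, dotProduct, add_mul, Finset.sum_add_distrib]
  have hH : A.IsHermitian := by
    ext i j
    simp [hA, hsym i j, mul_comm, eq_comm]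
  have hP : A.PosSemidef := by
    rw [hH.posSemidef_iff_eigenvalues_nonneg]
    intro k
    have hk := hH.mulVec_eigenvectorBasis k
    set v : V → ℝ := (hH.eigenvectorBasis k).ofLp with hv
    have hv0 : v ≠ 0 := by
      intro h0
      have := hH.eigenvectorBasis.orthonormal.ne_zero k
      apply this
      ext i
      exact congrFun h0 i
    have : IsEigen w (lam - hH.eigenvalues k) := by
      refine ⟨fun i => v i / s i, ?_, fun i => ?_⟩
      · intro h0
        apply hv0
        ext i
        have := congrFun h0 i
        simpa [(hs i).ne'] using this
      · have h1 := congrFun hk i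
        rw [hmul] at h1
        simp only [Pi.smul_apply, smul_eq_mul] at h1
        have h2 : ∑ j, w i j / (s i * s j) * v j = (∑ j, w i j * (v j / s j)) / s i := by
          rw [Finset.sum_div]
          refine Finset.sum_congr rfl fun j _ => ?_
          have := (hs i).ne'; have := (hs j).ne'
          field_simp
        rw [h2] at h1
        unfold lap
        rw [← hs2 i]
        have := (hs i).ne'
        generalize (∑ j, w i j * (v j / s j)) = S at *
        field_simp at h1 ⊢
        linear_combination -h1
    have := hmax _ this
    simpa using this
  have h := hP.dotProduct_mulVec_nonneg (fun i => s i * u i)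
  have e : star (fun i => s i * u i) ⬝ᵥ A.mulVec (fun i => s i * u i)
      = (lam - 1) * ∑ i, deg w i * u i ^ 2 + ∑ i, ∑ j, w i j * (u i * u j) := by
    simp only [dotProduct, hmul, Finset.mul_sum]
    rw [← Finset.sum_add_distrib]
    refine Finset.sum_congr rfl fun i _ => ?_
    simp only [Pi.star_apply, star_trivial, mul_add, Finset.mul_sum]
    congr 1
    · rw [← hs2 i]; ring
    · refine Finset.sum_congr rfl fun j _ => ?_
      have := (hs i).ne'; have := (hs j).ne'
      field_simp
  rwa [e] at h

lemma dc_bdd (w : V → V → ℝ) : BddAbove { r : ℝ | ∃ V1 V2 : Finset V, V1.Nonempty ∧ V2.Nonempty ∧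
    Disjoint V1 V2 ∧ r = 2 * eW w V1 V2 / (vol w V1 + vol w V2) } := by
  apply Set.Finite.bddAbove
  refine (Set.finite_range (fun p : Finset V × Finset V =>
    2 * eW w p.1 p.2 / (vol w p.1 + vol w p.2))).subset ?_
  rintro r ⟨A, B, _, _, _, rfl⟩
  exact ⟨(A, B), rfl⟩

lemma vol_nonneg (w : V → V → ℝ) (hdeg : ∀ i, 0 < deg w i) (A : Finset V) : 0 ≤ vol w A :=
  Finset.sum_nonneg fun i _ => (hdeg i).le

lemma vol_pos (w : V → V → ℝ) (hdeg : ∀ i, 0 < deg w i) (A : Finset V) (hA : A.Nonempty) :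
    0 < vol w A :=
  Finset.sum_pos (fun i _ => hdeg i) hA

lemma dc_nonneg (w : V → V → ℝ) (hnn : ∀ i j, 0 ≤ w i j) (hdeg : ∀ i, 0 < deg w i) :
    0 ≤ dualCheeger w := by
  apply Real.sSup_nonneg
  rintro r ⟨A, B, _, _, _, rfl⟩
  have := eW_nonneg w hnn A B
  have := vol_nonneg w hdeg A
  have := vol_nonneg w hdeg B
  positivity

lemma dc_le (w : V → V → ℝ) (hnn : ∀ i j, 0 ≤ w i j) (hdeg : ∀ i, 0 < deg w i)
    (A B : Finset V) (hd : Disjoint A B) :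
    2 * eW w A B ≤ dualCheeger w * (vol w A + vol w B) := by
  have h0 := dc_nonneg w hnn hdeg
  have hvA := vol_nonneg w hdeg A
  have hvB := vol_nonneg w hdeg B
  rcases A.eq_empty_or_nonempty with rfl | hA
  · simp only [eW, Finset.sum_empty, mul_zero]; positivity
  rcases B.eq_empty_or_nonempty with rfl | hB
  · simp only [eW, Finset.sum_empty, mul_zero, Finset.sum_const_zero]; positivity
  have hv := vol_pos w hdeg A hA
  rw [← div_le_iff₀ (by positivity)]
  exact le_csSup (dc_bdd w) ⟨A, B, hA, hB, hd, rfl⟩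

lemma sum_deg (w : V → V → ℝ) (x : V → ℝ) : ∑ i, deg w i * x i = ∑ i, ∑ j, w i j * x i := by
  simp only [deg, Finset.sum_mul]

lemma sum_deg' (w : V → V → ℝ) (hsym : ∀ i j, w i j = w j i) (x : V → ℝ) :
    ∑ i, deg w i * x i = ∑ i, ∑ j, w i j * x j := by
  rw [sum_deg, Finset.sum_comm]
  simp only [hsym]

lemma lower (w : V → V → ℝ)
    (hsym : ∀ i j, w i j = w j i) (hnn : ∀ i j, 0 ≤ w i j)
    (hdeg : ∀ i, 0 < deg w i) (hN : 2 ≤ Fintype.card V)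
    (lam : ℝ) (hmax : ∀ μ, IsEigen w μ → μ ≤ lam) :
    2 * dualCheeger w ≤ lam := by
  suffices h : dualCheeger w ≤ lam / 2 by linarith
  apply csSup_le
  · have : Nontrivial V := Fintype.one_lt_card_iff_nontrivial.1 (by omega)
    obtain ⟨a, b, hab⟩ := exists_pair_ne V
    exact ⟨_, {a}, {b}, by simp, by simp, by simpa using hab, rfl⟩
  rintro r ⟨A, B, hA, hB, hd, rfl⟩
  have hvA := vol_pos w hdeg A hA
  have hvB := vol_pos w hdeg B hB
  rw [div_le_iff₀ (by positivity)]
  have hr := rayleigh w hsym hdeg lam hmax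
    (fun i => (if i ∈ A then 1 else 0) - (if i ∈ B then 1 else 0))
  have hdd : ∀ i, i ∈ A → i ∉ B := fun i h h' => Finset.disjoint_left.1 hd h h'
  have hv : ∑ i, deg w i * ((if i ∈ A then (1:ℝ) else 0) - (if i ∈ B then 1 else 0)) ^ 2
      = vol w A + vol w B := by
    have : ∀ i, deg w i * ((if i ∈ A then (1:ℝ) else 0) - (if i ∈ B then 1 else 0)) ^ 2
      = (if i ∈ A then deg w i else 0) + (if i ∈ B then deg w i else 0) := by
      intro i
      have := hdd i
      by_cases h1 : i ∈ A <;> by_cases h2 : i ∈ B <;> simp_all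
    simp only [this, Finset.sum_add_distrib]
    simp [vol]
  have e1 : ∀ C D : Finset V, ∑ i, ∑ j, w i j * ((if i ∈ C then (1:ℝ) else 0) * (if j ∈ D then 1 else 0))
      = eW w C D := by
    intro C D
    have : ∀ i j, w i j * ((if i ∈ C then (1:ℝ) else 0) * (if j ∈ D then 1 else 0))
      = if i ∈ C then (if j ∈ D then w i j else 0) else 0 := by
      intro i j; split_ifs <;> simp
    simp only [this, eW]
    rw [← Finset.sum_filter_add_sum_filter_not univ (fun i => i ∈ C)]
    rw [Finset.sum_congr rfl (g := fun i => ∑ j ∈ D, w i j), Finset.sum_eq_zero (s := filter (fun i => i ∉ C) univ)]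
    · simp
    · intro i hi; simp at hi; simp [hi]
    · intro i hi; simp at hi; simp [hi]
  have e2 : ∑ i, ∑ j, w i j * (((if i ∈ A then (1:ℝ) else 0) - (if i ∈ B then 1 else 0)) *
      ((if j ∈ A then (1:ℝ) else 0) - (if j ∈ B then 1 else 0)))
      = eW w A A + eW w B B - eW w A B - eW w B A := by
    simp only [← e1, ← Finset.sum_add_distrib, ← Finset.sum_sub_distrib]
    refine Finset.sum_congr rfl fun i _ => Finset.sum_congr rfl fun j _ => ?_
    ring
  have e3 : eW w B A = eW w A B := by
    unfold eW
    rw [Finset.sum_comm]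
    simp only [hsym]
  have e4 : ∀ C : Finset V, eW w C A + eW w C B ≤ vol w C := by
    intro C
    unfold eW vol deg
    rw [← Finset.sum_add_distrib]
    refine Finset.sum_le_sum fun i _ => ?_
    rw [← Finset.sum_union hd]
    exact Finset.sum_le_sum_of_subset_of_nonneg (Finset.subset_univ _) fun j _ _ => hnn i j
  rw [hv, e2] at hr
  have := e4 A
  have := e4 B
  linarith

lemma key (w : V → V → ℝ)
    (hsym : ∀ i j, w i j = w j i) (hnn : ∀ i j, 0 ≤ w i j)
    (hdeg : ∀ i, 0 < deg w i) (u : V → ℝ) :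
    ∑ i, ∑ j, w i j * (if u i * u j < 0 then min (u i ^ 2) (u j ^ 2) else 0)
      ≤ dualCheeger w * ∑ i, deg w i * u i ^ 2 := by
  have h := layer (univ : Finset (V ⊕ (V × V)))
    (Sum.elim (fun i => dualCheeger w * deg w i)
      (fun p => - (w p.1 p.2 * (if u p.1 * u p.2 < 0 then 1 else 0))))
    (Sum.elim (fun i => u i ^ 2) (fun p => min (u p.1 ^ 2) (u p.2 ^ 2)))
    (by
      rintro (i | p)
      · exact sq_nonneg (u i)
      · exact le_min (sq_nonneg (u p.1)) (sq_nonneg (u p.2))) ?_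
  · rw [Fintype.sum_sum_type, Fintype.sum_prod_type] at h
    simp only [Sum.elim_inl, Sum.elim_inr] at h
    have e : ∀ i j, - (w i j * (if u i * u j < 0 then 1 else 0)) * min (u i ^ 2) (u j ^ 2)
      = - (w i j * (if u i * u j < 0 then min (u i ^ 2) (u j ^ 2) else 0)) := by
      intro i j; split_ifs <;> simp
    simp only [e, Finset.sum_neg_distrib, mul_assoc, ← Finset.mul_sum] at h
    linarith
  · intro t ht
    rw [Fintype.sum_sum_type, Fintype.sum_prod_type]
    simp only [Sum.elim_inl, Sum.elim_inr]
    set A := univ.filter (fun i => 0 < u i ∧ t < u i ^ 2) with hA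
    set B := univ.filter (fun i => u i < 0 ∧ t < u i ^ 2) with hB
    have hd : Disjoint A B := by
      rw [Finset.disjoint_left]
      intro i h1 h2
      simp [hA, hB] at h1 h2
      linarith [h1.1, h2.1]
    have hle := dc_le w hnn hdeg A B hd
    have e1 : vol w A + vol w B = ∑ i, deg w i * (if t < u i ^ 2 then 1 else 0) := by
      unfold vol
      rw [hA, hB, Finset.sum_filter, Finset.sum_filter, ← Finset.sum_add_distrib]
      refine Finset.sum_congr rfl fun i _ => ?_
      rcases lt_trichotomy (u i) 0 with h | h | h
      · simp [h, h.le, h.not_gt]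
      · simp [h, ht]
      · simp [h, h.le, h.not_gt]
    have e2 : eW w A B + eW w B A = ∑ i, ∑ j, w i j * (if u i * u j < 0 then 1 else 0) *
        (if t < min (u i ^ 2) (u j ^ 2) then 1 else 0) := by
      unfold eW
      rw [hA, hB, Finset.sum_filter, Finset.sum_filter, ← Finset.sum_add_distrib]
      refine Finset.sum_congr rfl fun i _ => ?_
      simp only [Finset.sum_filter]
      rcases lt_trichotomy (u i) 0 with h | h | h
      · by_cases h' : t < u i ^ 2
        · simp only [h, h', h.not_gt, mul_neg_iff]
          simp only [lt_min_iff, h', true_and, false_and, and_true, and_false, if_false, or_false, false_or,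
            add_zero, zero_add, if_true]
          refine Finset.sum_congr rfl fun j _ => ?_
          split_ifs <;> simp_all
        · simp [h']
      · simp [h]
      · by_cases h' : t < u i ^ 2
        · simp only [h, h', h.not_gt, mul_neg_iff]
          simp only [lt_min_iff, h', true_and, false_and, and_true, and_false, if_false, or_false, false_or,
            add_zero, zero_add, if_true]
          refine Finset.sum_congr rfl fun j _ => ?_
          split_ifs <;> simp_all
        · simp [h']
    have e3 : eW w B A = eW w A B := by
      unfold eW
      rw [Finset.sum_comm]
      simp only [hsym]
    have goal : 0 ≤ dualCheeger w * (∑ i, deg w i * (if t < u i ^ 2 then 1 else 0)) -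
        ∑ i, ∑ j, w i j * (if u i * u j < 0 then 1 else 0) *
        (if t < min (u i ^ 2) (u j ^ 2) then 1 else 0) := by
      rw [← e1, ← e2]
      linarith
    simp only [neg_mul, Finset.sum_neg_distrib, mul_assoc, ← Finset.mul_sum, sub_eq_add_neg] at goal ⊢
    exact goal

lemma upper (w : V → V → ℝ)
    (hsym : ∀ i j, w i j = w j i) (hnn : ∀ i j, 0 ≤ w i j)
    (hdeg : ∀ i, 0 < deg w i)
    (lam : ℝ) (hlam : IsEigen w lam) (h1 : dualCheeger w ≤ 1) :
    lam ≤ 1 + Real.sqrt (1 - (1 - dualCheeger w) ^ 2) := by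
  obtain ⟨u, hu0, hu⟩ := hlam
  set D := ∑ i, deg w i * u i ^ 2 with hD
  have hDpos : 0 < D := by
    obtain ⟨i, hi⟩ := Function.ne_iff.1 hu0
    simp only [Pi.zero_apply] at hi
    refine Finset.sum_pos' (fun i _ => by have := hdeg i; positivity) ⟨i, mem_univ _, ?_⟩
    have := hdeg i
    positivity
  have huu : ∑ i, ∑ j, w i j * (u i * u j) = (1 - lam) * D := by
    rw [hD, Finset.mul_sum]
    refine Finset.sum_congr rfl fun i _ => ?_
    have h := hu i
    unfold lap at h
    have e : ∑ j, w i j * (u i * u j) = u i * ∑ j, w i j * u j := by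
      rw [Finset.mul_sum]
      exact Finset.sum_congr rfl fun j _ => by ring
    rw [e]
    have := (hdeg i).ne'
    generalize ∑ j, w i j * u j = S at *
    field_simp at h
    linear_combination (-u i) * h
  have hD1 : D = ∑ i, ∑ j, w i j * u i ^ 2 := sum_deg w (fun i => u i ^ 2)
  have hD2 : D = ∑ i, ∑ j, w i j * u j ^ 2 := sum_deg' w hsym (fun i => u i ^ 2)
  -- the product over opposite pairs
  set q : V → V → ℝ := fun i j => if u i * u j < 0 then u i * u j else 0 with hq
  set Q := ∑ i, ∑ j, w i j * q i j with hQ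
  have hQle : Q ≤ (1 - lam) * D := by
    rw [hQ, ← huu]
    refine Finset.sum_le_sum fun i _ => Finset.sum_le_sum fun j _ => ?_
    apply mul_le_mul_of_nonneg_left _ (hnn i j)
    simp only [hq]
    split_ifs with h
    · exact le_rfl
    · exact not_lt.1 h
  set g : V → V → ℝ := fun i j => u i ^ 2 + u j ^ 2 -
    2 * (if u i * u j < 0 then min (u i ^ 2) (u j ^ 2) else 0) with hg
  have hgs : 2 * (1 - dualCheeger w) * D ≤ ∑ i, ∑ j, w i j * g i j := by
    have hk := key w hsym hnn hdeg u
    have e : ∑ i, ∑ j, w i j * g i j = D + D - 2 * ∑ i, ∑ j, w i j * (if u i * u j < 0 then min (u i ^ 2) (u j ^ 2) else 0) := by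
      nth_rw 1 [hD1]
      rw [hD2]
      simp only [Finset.mul_sum, ← Finset.sum_add_distrib, ← Finset.sum_sub_distrib]
      refine Finset.sum_congr rfl fun i _ => Finset.sum_congr rfl fun j _ => ?_
      simp only [hg]; ring
    rw [e]; linarith
  -- Cauchy-Schwarz
  have hP : ∀ i j, 0 ≤ u i ^ 2 + u j ^ 2 + 2 * q i j ∧ 0 ≤ u i ^ 2 + u j ^ 2 - 2 * q i j ∧
      g i j ^ 2 = (u i ^ 2 + u j ^ 2 + 2 * q i j) * (u i ^ 2 + u j ^ 2 - 2 * q i j) := by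
    intro i j
    simp only [hq, hg]
    split_ifs with h
    · refine ⟨by nlinarith [sq_nonneg (u i + u j)], by nlinarith [sq_nonneg (u i - u j)], ?_⟩
      rcases le_total (u i ^ 2) (u j ^ 2) with h' | h'
      · rw [min_eq_left h']; ring
      · rw [min_eq_right h']; ring
    · refine ⟨by positivity, by simp; positivity, by ring⟩
  have hCS : (∑ i, ∑ j, w i j * g i j) ^ 2 ≤
      (∑ i, ∑ j, w i j * (u i ^ 2 + u j ^ 2 + 2 * q i j)) *
      (∑ i, ∑ j, w i j * (u i ^ 2 + u j ^ 2 - 2 * q i j)) := by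
    simp only [← Fintype.sum_prod_type']
    apply Finset.sum_sq_le_sum_mul_sum_of_sq_eq_mul
    · rintro ⟨i, j⟩ _; exact mul_nonneg (hnn i j) (hP i j).1
    · rintro ⟨i, j⟩ _; exact mul_nonneg (hnn i j) (hP i j).2.1
    · rintro ⟨i, j⟩ _
      simp only
      rw [mul_pow, (hP i j).2.2]; ring
  have eA : ∑ i, ∑ j, w i j * (u i ^ 2 + u j ^ 2 + 2 * q i j) = D + D + 2 * Q := by
    nth_rw 1 [hD1]
    rw [hD2, hQ]
    simp only [Finset.mul_sum, ← Finset.sum_add_distrib]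
    refine Finset.sum_congr rfl fun i _ => Finset.sum_congr rfl fun j _ => ?_
    ring
  have eB : ∑ i, ∑ j, w i j * (u i ^ 2 + u j ^ 2 - 2 * q i j) = D + D - 2 * Q := by
    nth_rw 1 [hD1]
    rw [hD2, hQ]
    simp only [Finset.mul_sum, ← Finset.sum_add_distrib, ← Finset.sum_sub_distrib]
    refine Finset.sum_congr rfl fun i _ => Finset.sum_congr rfl fun j _ => ?_
    ring
  rw [eA, eB] at hCS
  have hsq : (2 * (1 - dualCheeger w) * D) ^ 2 ≤ (∑ i, ∑ j, w i j * g i j) ^ 2 :=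
    pow_le_pow_left₀ (by have := sub_nonneg.2 h1; positivity) hgs 2
  by_cases hl : lam ≤ 1
  · have := Real.sqrt_nonneg (1 - (1 - dualCheeger w) ^ 2)
    linarith
  · push Not at hl
    have hQ2 : ((lam - 1) * D) ^ 2 ≤ Q ^ 2 := by
      rw [← neg_sq Q]
      exact pow_le_pow_left₀ (mul_nonneg (by linarith) hDpos.le) (by linarith) 2
    have : lam - 1 ≤ Real.sqrt (1 - (1 - dualCheeger w) ^ 2) := by
      apply Real.le_sqrt_of_sq_le
      have hD2 : 0 < D ^ 2 := by positivity
      have : (lam - 1) ^ 2 * D ^ 2 ≤ (1 - (1 - dualCheeger w) ^ 2) * D ^ 2 := by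
        nlinarith
      exact le_of_mul_le_mul_right this hD2
    linarith

lemma dc_le_one (w : V → V → ℝ) (hsym : ∀ i j, w i j = w j i) (hnn : ∀ i j, 0 ≤ w i j)
    (hdeg : ∀ i, 0 < deg w i) : dualCheeger w ≤ 1 := by
  apply Real.sSup_le _ zero_le_one
  rintro r ⟨A, B, hA, hB, hd, rfl⟩
  have hvA := vol_pos w hdeg A hA
  have hvB := vol_pos w hdeg B hB
  rw [div_le_one (by positivity)]
  have h : ∀ C D : Finset V, eW w C D ≤ vol w C := fun C D =>
    Finset.sum_le_sum fun i _ =>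
      Finset.sum_le_sum_of_subset_of_nonneg (Finset.subset_univ _) fun j _ _ => hnn i j
  have e3 : eW w B A = eW w A B := by
    unfold eW
    rw [Finset.sum_comm]
    simp only [hsym]
  linarith [h A B, h B A]

/-- Theorem: dual Cheeger inequality.
The largest eigenvalue `λ_{N-1}` of the normalized Laplacian satisfies
`2 h̄ ≤ λ_{N-1} ≤ 1 + √(1 - (1 - h̄)²)`. -/
theorem dual_cheeger_inequality
    (w : V → V → ℝ)
    (hsym : ∀ i j, w i j = w j i) (hnn : ∀ i j, 0 ≤ w i j)
    (hdeg : ∀ i, 0 < deg w i) (hconn : Conn w) (hN : 2 ≤ Fintype.card V)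
    (lam : ℝ) (hlam : IsEigen w lam) (hmax : ∀ μ, IsEigen w μ → μ ≤ lam) :
    2 * dualCheeger w ≤ lam ∧
      lam ≤ 1 + Real.sqrt (1 - (1 - dualCheeger w) ^ 2) := by
  exact ⟨lower w hsym hnn hdeg hN lam hmax,
    upper w hsym hnn hdeg lam hlam (dc_le_one w hsym hnn hdeg)⟩

end BJ
end
end

section
/- Let V = V_1 ∪ V_2 ∪ V_3 be a partition into pairwise disjoint sets with V_1, V_2 nonempty that achieves the dual Cheeger constant, i.e. h̄ = 2|E(V_1,V_2)|/(vol(V_1)+vol(V_2)). If vol(V_1 ∪ V_2) ≤ vol(V_3), then λ_{N−1} ≥ 2·h̄ + R(V_1,V_2)·h, where R(V_1,V_2) := min(vol(V_1), vol(V_2))/max(vol(V_1), vol(V_2)). -/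
open Finset

noncomputable section

namespace BJ

variable {V : Type*} [Fintype V] [DecidableEq V]

theorem rayleigh_aux (w : V → V → ℝ) (hsym : ∀ i j, w i j = w j i)
    (hdeg : ∀ i, 0 < deg w i) (lam : ℝ) (hmax : ∀ μ, IsEigen w μ → μ ≤ lam) (f : V → ℝ) :
    ∑ i, deg w i * f i ^ 2 - ∑ i, ∑ j, w i j * f i * f j ≤ lam * ∑ i, deg w i * f i ^ 2 := by
  have hs : ∀ i, 0 < √(deg w i) := fun i => Real.sqrt_pos.2 (hdeg i)
  have hss : ∀ i, √(deg w i) * √(deg w i) = deg w i := fun i => Real.mul_self_sqrt (hdeg i).le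
  let B : Matrix V V ℝ := Matrix.of fun i j => w i j / (√(deg w i) * √(deg w j))
  let A : Matrix V V ℝ := (lam - 1) • (1 : Matrix V V ℝ) + B
  have hmv : ∀ (v : V → ℝ) i, (A.mulVec v) i
      = (lam - 1) * v i + ∑ j, w i j / (√(deg w i) * √(deg w j)) * v j := by
    intro v i
    simp only [A, Matrix.add_mulVec, Matrix.smul_mulVec, Matrix.one_mulVec, Pi.add_apply,
      Pi.smul_apply, smul_eq_mul]
    rfl
  have hA : A.IsHermitian := by
    ext i j
    simp only [A, B, Matrix.conjTranspose_apply, Matrix.add_apply, Matrix.smul_apply,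
      Matrix.of_apply, Matrix.one_apply, star_trivial, eq_comm (a := j) (b := i), hsym j i,
      mul_comm √(deg w j)]
  have hpsd : A.PosSemidef := by
    rw [hA.posSemidef_iff_eigenvalues_nonneg]
    intro k
    have hv := hA.mulVec_eigenvectorBasis k
    set v : V → ℝ := ⇑(hA.eigenvectorBasis k) with hvdef
    have hv0 : v ≠ 0 := by
      intro h
      apply hA.eigenvectorBasis.toBasis.ne_zero k
      ext i
      simpa using congrFun h i
    have : lam - hA.eigenvalues k ≤ lam := by
      apply hmax
      refine ⟨fun i => v i / √(deg w i), ?_, ?_⟩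
      · intro h
        apply hv0
        ext i
        have := congrFun h i
        simp only [Pi.zero_apply, div_eq_zero_iff, (hs i).ne', or_false] at this
        simpa using this
      · intro i
        have h1 := (hmv v i).symm.trans (congrFun hv i)
        simp only [Pi.smul_apply, smul_eq_mul] at h1
        have h2 : ∑ j, w i j / (√(deg w i) * √(deg w j)) * v j
            = (1 / √(deg w i)) * ∑ j, w i j * (v j / √(deg w j)) := by
          rw [Finset.mul_sum]
          refine Finset.sum_congr rfl fun j _ => ?_
          have := (hs i).ne'; have := (hs j).ne'
          field_simp
        rw [h2] at h1
        unfold lap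
        rw [← hss i]
        beta_reduce
        have := (hs i).ne'
        generalize ∑ j, w i j * (v j / √(deg w j)) = S at *
        field_simp at h1 ⊢
        linarith
    simpa using this
  have h := hpsd.dotProduct_mulVec_nonneg (fun i => √(deg w i) * f i)
  simp only [dotProduct, hmv, star_trivial, Pi.star_apply] at h
  have e : ∀ i, √(deg w i) * f i * ((lam - 1) * (√(deg w i) * f i) +
      ∑ j, w i j / (√(deg w i) * √(deg w j)) * (√(deg w j) * f j))
      = (lam - 1) * (deg w i * f i ^ 2) + ∑ j, w i j * f i * f j := by
    intro i
    rw [mul_add, Finset.mul_sum]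
    congr 1
    · rw [← hss i, Real.sqrt_mul_self (hs i).le]; ring
    · refine Finset.sum_congr rfl fun j _ => ?_
      have := (hs i).ne'; have := (hs j).ne'
      field_simp
  simp only [e, Finset.sum_add_distrib, ← Finset.mul_sum] at h
  linarith

/-- Corollary: improved lower bound for the largest eigenvalue.
If `V₁, V₂, V₃` is a partition achieving the dual Cheeger constant and
`vol(V₁ ∪ V₂) ≤ vol(V₃)`, then
`λ_{N-1} ≥ 2 h̄ + R(V₁,V₂) h` where `R(V₁,V₂) = min(vol V₁, vol V₂)/max(vol V₁, vol V₂)`. -/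
theorem largest_eigenvalue_ge_dualCheeger_add_cheeger
    (w : V → V → ℝ)
    (hsym : ∀ i j, w i j = w j i) (hnn : ∀ i j, 0 ≤ w i j)
    (hdeg : ∀ i, 0 < deg w i) (hconn : Conn w) (hN : 2 ≤ Fintype.card V)
    (V1 V2 : Finset V) (hV1 : V1.Nonempty) (hV2 : V2.Nonempty) (hdisj : Disjoint V1 V2)
    (hach : dualCheeger w = 2 * eW w V1 V2 / (vol w V1 + vol w V2))
    (hvol : vol w (V1 ∪ V2) ≤ vol w (V1 ∪ V2)ᶜ)
    (lam : ℝ) (hlam : IsEigen w lam) (hmax : ∀ μ, IsEigen w μ → μ ≤ lam) :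
    2 * dualCheeger w +
        (min (vol w V1) (vol w V2) / max (vol w V1) (vol w V2)) * cheeger w ≤ lam := by
  have ha : 0 < vol w V1 := Finset.sum_pos (fun i _ => hdeg i) hV1
  have hb : 0 < vol w V2 := Finset.sum_pos (fun i _ => hdeg i) hV2
  have hU : vol w (V1 ∪ V2) = vol w V1 + vol w V2 := Finset.sum_union hdisj
  have hUc : vol w (V1 ∪ V2) + vol w (V1 ∪ V2)ᶜ = vol w Finset.univ :=
    Finset.sum_add_sum_compl _ _
  have heU : eW w (V1 ∪ V2) (V1 ∪ V2) + eW w (V1 ∪ V2) (V1 ∪ V2)ᶜ = vol w (V1 ∪ V2) := by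
    unfold eW vol deg
    rw [← Finset.sum_add_distrib]
    exact Finset.sum_congr rfl fun i _ => Finset.sum_add_sum_compl _ _
  have h21 : eW w V2 V1 = eW w V1 V2 := by
    unfold eW
    rw [Finset.sum_comm]
    exact Finset.sum_congr rfl fun i _ => Finset.sum_congr rfl fun j _ => hsym _ _
  have hUU : eW w (V1 ∪ V2) (V1 ∪ V2) = eW w V1 V1 + eW w V2 V2 + 2 * eW w V1 V2 := by
    have : eW w (V1 ∪ V2) (V1 ∪ V2)
        = (eW w V1 V1 + eW w V1 V2) + (eW w V2 V1 + eW w V2 V2) := by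
      unfold eW
      rw [Finset.sum_union hdisj]
      simp only [Finset.sum_union hdisj, Finset.sum_add_distrib]
    rw [this, h21]; ring
  have hch : cheeger w ≤ eW w (V1 ∪ V2) (V1 ∪ V2)ᶜ / vol w (V1 ∪ V2) := by
    apply csInf_le
    · refine ⟨0, ?_⟩
      rintro r ⟨U, -, -, -, rfl⟩
      exact div_nonneg (Finset.sum_nonneg fun i _ => Finset.sum_nonneg fun j _ => hnn i j)
        (Finset.sum_nonneg fun i _ => (hdeg i).le)
    · refine ⟨V1 ∪ V2, hV1.mono Finset.subset_union_left, ?_, by linarith, rfl⟩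
      intro h
      rw [h] at hvol hU
      simp only [Finset.compl_univ] at hvol
      have : vol w (∅ : Finset V) = 0 := Finset.sum_empty
      linarith
  have hch0 : 0 ≤ cheeger w := by
    apply Real.sInf_nonneg
    rintro r ⟨U, -, -, -, rfl⟩
    exact div_nonneg (Finset.sum_nonneg fun i _ => Finset.sum_nonneg fun j _ => hnn i j)
      (Finset.sum_nonneg fun i _ => (hdeg i).le)
  have hR : min (vol w V1) (vol w V2) / max (vol w V1) (vol w V2) ≤ 1 :=
    div_le_one_of_le₀ min_le_max (le_max_of_le_left ha.le)
  have hRh := mul_le_mul_of_nonneg_right hR hch0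
  have hray := rayleigh_aux w hsym hdeg lam hmax
    (fun i => (if i ∈ V1 then 1 else 0) - (if i ∈ V2 then 1 else 0))
  have e1 : ∑ i, deg w i * ((if i ∈ V1 then (1 : ℝ) else 0) - (if i ∈ V2 then 1 else 0)) ^ 2
      = vol w V1 + vol w V2 := by
    rw [← hU]
    unfold vol
    rw [← Finset.sum_filter_add_sum_filter_not Finset.univ (· ∈ V1 ∪ V2)]
    rw [Finset.sum_eq_zero (s := Finset.univ.filter (¬ · ∈ V1 ∪ V2)), add_zero]
    · rw [Finset.filter_mem_eq_inter, Finset.univ_inter]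
      refine Finset.sum_congr rfl fun i hi => ?_
      have : i ∈ V1 → i ∉ V2 := fun q => Finset.disjoint_left.1 hdisj q
      rcases Finset.mem_union.1 hi with h | h
      · simp [h, this h]
      · have h' : i ∉ V1 := fun q => this q h
        simp [h, h']
    · intro i hi
      simp only [Finset.mem_filter, Finset.mem_union, not_or] at hi
      simp [hi.2.1, hi.2.2]
  have e2 : ∑ i, ∑ j, w i j * ((if i ∈ V1 then (1 : ℝ) else 0) - (if i ∈ V2 then 1 else 0)) *
      ((if j ∈ V1 then (1 : ℝ) else 0) - (if j ∈ V2 then 1 else 0))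
      = (eW w V1 V1 - eW w V1 V2) - (eW w V2 V1 - eW w V2 V2) := by
    have key : ∀ S T : Finset V, eW w S T = ∑ i, ∑ j,
        w i j * (if i ∈ S then (1 : ℝ) else 0) * (if j ∈ T then (1 : ℝ) else 0) := by
      intro S T
      unfold eW
      rw [← Finset.univ_inter S, ← Finset.univ_inter T, ← Finset.sum_ite_mem]
      refine Finset.sum_congr rfl fun i _ => ?_
      by_cases h : i ∈ S <;> simp [h]
    simp only [key, ← Finset.sum_sub_distrib]
    refine Finset.sum_congr rfl fun i _ => Finset.sum_congr rfl fun j _ => ?_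
    ring
  rw [e1, e2, h21] at hray
  have hfin : 2 * dualCheeger w + eW w (V1 ∪ V2) (V1 ∪ V2)ᶜ / vol w (V1 ∪ V2) ≤ lam := by
    rw [hach, hU]
    have : 2 * (2 * eW w V1 V2 / (vol w V1 + vol w V2)) +
        eW w (V1 ∪ V2) (V1 ∪ V2)ᶜ / (vol w V1 + vol w V2) =
        (4 * eW w V1 V2 + eW w (V1 ∪ V2) (V1 ∪ V2)ᶜ) / (vol w V1 + vol w V2) := by ring
    rw [this, div_le_iff₀ (by linarith)]
    linarith
  linarith

end BJ
end
end

section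
/- Let u : V → ℝ be an eigenfunction of Δ for the largest eigenvalue λ_{N−1}. If the eigenfunction is sufficiently localized, namely ∑_{i : u(i) ≠ 0} d_i ≤ ∑_{i : u(i) = 0} d_i, then λ_{N−1} ≤ 1 + √(1 − h²). -/
open Finset

noncomputable section

namespace BJ

variable {V : Type*} [Fintype V] [DecidableEq V]

lemma cheeger_mul_le (w : V → V → ℝ) (hnn : ∀ i j, 0 ≤ w i j) (hdeg : ∀ i, 0 < deg w i)
    (U : Finset V) (hU : U.Nonempty) (hvol : vol w U ≤ vol w Finset.univ / 2) :
    cheeger w * vol w U ≤ eW w U Uᶜ := by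
  have hpos : 0 < vol w U := Finset.sum_pos (fun i _ => hdeg i) hU
  have hne : U ≠ Finset.univ := by
    rintro rfl
    linarith
  rw [← le_div_iff₀ hpos]
  refine csInf_le ⟨0, ?_⟩ ⟨U, hU, hne, hvol, rfl⟩
  rintro r ⟨W, -, -, -, rfl⟩
  exact div_nonneg (Finset.sum_nonneg fun i _ => Finset.sum_nonneg fun j _ => hnn i j)
    (Finset.sum_nonneg fun i _ => (hdeg i).le)

lemma cheeger_nonneg (w : V → V → ℝ) (hnn : ∀ i j, 0 ≤ w i j) (hdeg : ∀ i, 0 < deg w i) :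
    0 ≤ cheeger w := by
  apply Real.sInf_nonneg
  rintro r ⟨W, -, -, -, rfl⟩
  exact div_nonneg (Finset.sum_nonneg fun i _ => Finset.sum_nonneg fun j _ => hnn i j)
    (Finset.sum_nonneg fun i _ => (hdeg i).le)

lemma cut_sum (w : V → V → ℝ) (hsym : ∀ i j, w i j = w j i) (U : Finset V) :
    ∑ i, ∑ j, w i j * |(if i ∈ U then (1:ℝ) else 0) - (if j ∈ U then 1 else 0)|
      = 2 * eW w U Uᶜ := by
  have h1 : eW w U Uᶜ = ∑ i, ∑ j, if i ∈ U ∧ j ∉ U then w i j else 0 := by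
    unfold eW
    rw [← Finset.sum_filter_add_sum_filter_not Finset.univ (fun i => i ∈ U)]
    rw [Finset.sum_eq_zero (s := Finset.univ.filter (fun i => i ∉ U))]
    · rw [Finset.filter_univ_mem, add_zero]
      refine Finset.sum_congr rfl fun i hi => ?_
      simp only [hi, true_and]
      rw [← Finset.sum_filter]
      congr 1
      ext j; simp
    · intro i hi
      simp at hi
      simp [hi]
  have h2 : eW w U Uᶜ = ∑ i, ∑ j, if j ∈ U ∧ i ∉ U then w i j else 0 := by
    rw [h1, Finset.sum_comm]
    refine Finset.sum_congr rfl fun i _ => Finset.sum_congr rfl fun j _ => ?_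
    rw [hsym]
  rw [two_mul]
  nth_rewrite 1 [h1]
  rw [h2, ← Finset.sum_add_distrib]
  refine Finset.sum_congr rfl fun i _ => ?_
  rw [← Finset.sum_add_distrib]
  refine Finset.sum_congr rfl fun j _ => ?_
  by_cases hi : i ∈ U <;> by_cases hj : j ∈ U <;> simp [hi, hj]

lemma coarea_s6 (w : V → V → ℝ) (hsym : ∀ i j, w i j = w j i)
    (hnn : ∀ i j, 0 ≤ w i j) (hdeg : ∀ i, 0 < deg w i) (U : Finset V) :
    ∀ f : V → ℝ, (∀ i, 0 ≤ f i) → (∀ i, i ∉ U → f i = 0) →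
      vol w U ≤ vol w Finset.univ / 2 →
      2 * cheeger w * ∑ i, deg w i * f i ≤ ∑ i, ∑ j, w i j * |f i - f j| := by
  induction U using Finset.strongInduction with
  | H U ih =>
  intro f hf hfU hvol
  rcases U.eq_empty_or_nonempty with rfl | hU
  · have : ∀ i, f i = 0 := fun i => hfU i (by simp)
    simp [this]
  obtain ⟨a, ha, hmin⟩ := Finset.exists_min_image U f hU
  set χ : V → ℝ := fun i => if i ∈ U then (1:ℝ) else 0 with hχ
  have hvol' : vol w (U.erase a) ≤ vol w Finset.univ / 2 :=
    le_trans (Finset.sum_le_sum_of_subset_of_nonneg (Finset.erase_subset a U)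
      (fun i _ _ => (hdeg i).le)) hvol
  have key := ih (U.erase a) (Finset.erase_ssubset ha) (fun i => f i - f a * χ i)
    (by
      intro i
      by_cases hi : i ∈ U
      · simp [hχ, hi, hmin i hi]
      · simp [hχ, hi, hf i])
    (by
      intro i hi
      by_cases hia : i = a
      · subst hia; simp [hχ, ha]
      · have : i ∉ U := fun h => hi (Finset.mem_erase.2 ⟨hia, h⟩)
        simp [hχ, this, hfU i this])
    hvol'
  have hcut := cut_sum w hsym U
  have hch := cheeger_mul_le w hnn hdeg U hU hvol
  have hsum : ∑ i, ∑ j, w i j * |f i - f j|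
      = ∑ i, ∑ j, w i j * |(f i - f a * χ i) - (f j - f a * χ j)|
        + f a * ∑ i, ∑ j, w i j * |χ i - χ j| := by
    rw [Finset.mul_sum, ← Finset.sum_add_distrib]
    refine Finset.sum_congr rfl fun i _ => ?_
    rw [Finset.mul_sum, ← Finset.sum_add_distrib]
    refine Finset.sum_congr rfl fun j _ => ?_
    have : |f i - f j| = |(f i - f a * χ i) - (f j - f a * χ j)| + f a * |χ i - χ j| := by
      have h0 := hf a
      by_cases hi : i ∈ U <;> by_cases hj : j ∈ U
      · simp [hχ, hi, hj]
      · have := hmin i hi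
        have := hfU j hj
        simp only [hχ, hi, hj, if_true, if_false, this]
        rw [abs_of_nonneg (by linarith [hf i]), abs_of_nonneg (by linarith)]
        norm_num
      · have := hmin j hj
        have := hfU i hi
        simp only [hχ, hi, hj, if_true, if_false, this]
        rw [abs_of_nonpos (by linarith [hf j]), abs_of_nonpos (by linarith)]
        norm_num
      · simp [hχ, hi, hj]
    rw [this]; ring
  have hd : ∑ i, deg w i * (f i - f a * χ i) = ∑ i, deg w i * f i - f a * vol w U := by
    have : vol w U = ∑ i, deg w i * χ i := by
      simp [hχ, vol]
    rw [this, Finset.mul_sum, ← Finset.sum_sub_distrib]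
    refine Finset.sum_congr rfl fun i _ => ?_
    ring
  rw [hd] at key
  rw [hsum, hcut]
  have := mul_le_mul_of_nonneg_left hch (hf a)
  linarith

lemma cs_bound (w : V → V → ℝ) (hsym : ∀ i j, w i j = w j i)
    (hnn : ∀ i j, 0 ≤ w i j) (g : V → ℝ) (hg : ∀ i, 0 ≤ g i) :
    (∑ i, ∑ j, w i j * |g i ^ 2 - g j ^ 2|) ^ 2 ≤
      4 * ((∑ i, deg w i * g i ^ 2) ^ 2 - (∑ i, ∑ j, w i j * (g i * g j)) ^ 2) := by
  have e1 : ∑ i, ∑ j, w i j * g i ^ 2 = ∑ i, deg w i * g i ^ 2 := by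
    refine Finset.sum_congr rfl fun i _ => ?_
    rw [deg, Finset.sum_mul]
  have e2 : ∑ i, ∑ j, w i j * g j ^ 2 = ∑ i, deg w i * g i ^ 2 := by
    rw [← e1, Finset.sum_comm]
    refine Finset.sum_congr rfl fun i _ => Finset.sum_congr rfl fun j _ => ?_
    rw [hsym]
  have em : ∑ i, ∑ j, w i j * (g i - g j) ^ 2
      = 2 * (∑ i, deg w i * g i ^ 2) - 2 * ∑ i, ∑ j, w i j * (g i * g j) := by
    rw [two_mul]
    nth_rewrite 1 [← e1]
    rw [← e2]
    simp only [Finset.mul_sum, ← Finset.sum_add_distrib, ← Finset.sum_sub_distrib]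
    refine Finset.sum_congr rfl fun i _ => Finset.sum_congr rfl fun j _ => ?_
    ring
  have ep : ∑ i, ∑ j, w i j * (g i + g j) ^ 2
      = 2 * (∑ i, deg w i * g i ^ 2) + 2 * ∑ i, ∑ j, w i j * (g i * g j) := by
    rw [two_mul]
    nth_rewrite 1 [← e1]
    rw [← e2]
    simp only [Finset.mul_sum, ← Finset.sum_add_distrib]
    refine Finset.sum_congr rfl fun i _ => Finset.sum_congr rfl fun j _ => ?_
    ring
  have cs := Finset.sum_sq_le_sum_mul_sum_of_sq_eq_mul (Finset.univ : Finset (V × V))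
    (r := fun p => w p.1 p.2 * |g p.1 ^ 2 - g p.2 ^ 2|)
    (f := fun p => w p.1 p.2 * (g p.1 - g p.2) ^ 2)
    (g := fun p => w p.1 p.2 * (g p.1 + g p.2) ^ 2)
    (fun p _ => mul_nonneg (hnn _ _) (sq_nonneg _))
    (fun p _ => mul_nonneg (hnn _ _) (sq_nonneg _))
    (fun p _ => by rw [mul_pow, sq_abs]; ring)
  simp only [Fintype.sum_prod_type] at cs
  rw [em, ep] at cs
  linarith

/-- Corollary: localized top eigenfunction.
If `u` is an eigenfunction for the largest eigenvalue `λ_{N-1}` and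
`∑_{i : u(i) ≠ 0} d_i ≤ ∑_{i : u(i) = 0} d_i`, then `λ_{N-1} ≤ 1 + √(1 - h²)`. -/
theorem largest_eigenvalue_le_of_localized_eigenfunction
    (w : V → V → ℝ)
    (hsym : ∀ i j, w i j = w j i) (hnn : ∀ i j, 0 ≤ w i j)
    (hdeg : ∀ i, 0 < deg w i) (hconn : Conn w) (hN : 2 ≤ Fintype.card V)
    (lam : ℝ) (u : V → ℝ) (hu : u ≠ 0) (heig : ∀ i, lap w u i = lam * u i)
    (hmax : ∀ μ, IsEigen w μ → μ ≤ lam)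
    (hloc : ∑ i ∈ Finset.univ.filter (fun i => u i ≠ 0), deg w i ≤
            ∑ i ∈ Finset.univ.filter (fun i => u i = 0), deg w i) :
    lam ≤ 1 + Real.sqrt (1 - cheeger w ^ 2) := by
  set S := ∑ i, deg w i * |u i| ^ 2 with hS
  set T := ∑ i, ∑ j, w i j * (|u i| * |u j|) with hT
  have hSpos : 0 < S := by
    obtain ⟨a, ha⟩ := Function.ne_iff.1 hu
    refine Finset.sum_pos' (fun i _ => mul_nonneg (hdeg i).le (sq_nonneg _))
      ⟨a, Finset.mem_univ a, mul_pos (hdeg a) (pow_pos (abs_pos.2 ha) 2)⟩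
  by_cases hl : lam ≤ 1
  · linarith [Real.sqrt_nonneg (1 - cheeger w ^ 2)]
  push Not at hl
  have hTS : (lam - 1) * S ≤ T := by
    rw [hS, hT, Finset.mul_sum]
    refine Finset.sum_le_sum fun i _ => ?_
    have h := heig i
    unfold lap at h
    have hd := (hdeg i).ne'
    have h1 : ∑ j, w i j * u j = deg w i * ((1 - lam) * u i) := by
      have : (1 / deg w i) * ∑ j, w i j * u j = (1 - lam) * u i := by linarith
      rw [← this]; field_simp
    have h2 : (lam - 1) * (deg w i * |u i| ^ 2) = ∑ j, -(w i j * (u i * u j)) := by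
      rw [Finset.sum_neg_distrib, sq_abs]
      have : ∑ j, w i j * (u i * u j) = u i * ∑ j, w i j * u j := by
        rw [Finset.mul_sum]
        exact Finset.sum_congr rfl fun j _ => by ring
      rw [this, h1]; ring
    rw [h2]
    refine Finset.sum_le_sum fun j _ => ?_
    rw [← abs_mul, ← mul_neg]
    exact mul_le_mul_of_nonneg_left (neg_le_abs _) (hnn i j)
  have hvol : vol w (Finset.univ.filter (fun i => u i ≠ 0)) ≤ vol w Finset.univ / 2 := by
    have := Finset.sum_filter_add_sum_filter_not Finset.univ (fun i => u i = 0) (deg w)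
    unfold vol
    linarith
  have hco := coarea_s6 w hsym hnn hdeg _ (fun i => |u i| ^ 2) (fun i => sq_nonneg _)
    (by intro i hi; simpa using hi) hvol
  have hcs := cs_bound w hsym hnn (fun i => |u i|) (fun i => abs_nonneg _)
  have hh := cheeger_nonneg w hnn hdeg
  simp only [← hS, ← hT] at hco hcs
  have h3 : (2 * cheeger w * S) ^ 2 ≤ 4 * (S ^ 2 - T ^ 2) :=
    le_trans (pow_le_pow_left₀ (by positivity) hco 2) hcs
  have h4 : ((lam - 1) * S) ^ 2 ≤ T ^ 2 :=
    pow_le_pow_left₀ (mul_nonneg (by linarith) hSpos.le) hTS 2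
  have h5 : (lam - 1) ^ 2 ≤ 1 - cheeger w ^ 2 := by
    have : (lam - 1) ^ 2 * S ^ 2 ≤ (1 - cheeger w ^ 2) * S ^ 2 := by nlinarith
    exact le_of_mul_le_mul_right this (by positivity)
  have := Real.le_sqrt_of_sq_le h5
  linarith

end BJ
end
end

section
/- Let u : V → ℝ be an eigenfunction of Δ for the largest eigenvalue λ_{N−1}, normalized so that max_{i∈V} |u(i)| = 1. Then λ_{N−1} ≤ 2 − w_min·(1 − min_{i∈V}|u(i)|)² / (D·vol(V)), where w_min := min{ w_{ij} : i,j ∈ V, w_{ij} > 0 } is the smallest positive edge weight and D is the diameter of Γ (the maximal graph distance between two vertices, edges being pairs with positive weight). In particular, if there is a vertex i with u(i) = 0, then λ_{N−1} ≤ 2 − w_min/(D·vol(V)). -/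
open Finset

noncomputable section

namespace BJ

variable {V : Type*} [Fintype V] [DecidableEq V]

theorem aux_cs (x y n Y X : ℝ) (hn : 0 ≤ n) (hX : x ^ 2 ≤ X) (hY : 0 ≤ Y) (h : y ^ 2 ≤ n * Y) :
    (x + y) ^ 2 ≤ (n + 1) * (X + Y) := by
  have h0 : (x + y) ^ 2 ≤ (n + 1) * (x ^ 2 + Y) := by
    rcases hn.eq_or_lt with h0 | h0
    · subst h0
      have : y = 0 := by
        have : y ^ 2 ≤ 0 := by simpa using h
        nlinarith [sq_nonneg y, pow_eq_zero_iff (two_ne_zero) |>.1 (le_antisymm this (sq_nonneg y))]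
      subst this
      nlinarith
    · have : 0 ≤ n * x ^ 2 + Y - 2 * x * y := by
        have : 0 ≤ n * (n * x ^ 2 + Y - 2 * x * y) := by nlinarith [sq_nonneg (n * x - y)]
        exact nonneg_of_mul_nonneg_right this h0
      nlinarith
  have : (n + 1) * (x ^ 2 + Y) ≤ (n + 1) * (X + Y) := by gcongr
  linarith

theorem aux_path (w : V → V → ℝ) (u : V → ℝ) (wmin : ℝ)
    (hsym : ∀ i j, w i j = w j i) (hnn : ∀ i j, 0 ≤ w i j) (h0 : 0 ≤ wmin)
    (hw : ∀ i j, 0 < w i j → wmin ≤ w i j) {a b : V}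
    (p : (SimpleGraph.fromRel fun a b => 0 < w a b).Walk a b) (hp : p.IsPath) :
    ∃ S : Finset V, (∀ v, v ∈ S ↔ v ∈ p.support) ∧
    ∃ Y : ℝ, 0 ≤ Y ∧ 2 * wmin * Y ≤ ∑ i ∈ S, ∑ j ∈ S, w i j * (u i + u j) ^ 2 ∧
      (|u a| - |u b|) ^ 2 ≤ p.length * Y := by
  induction p with
  | nil =>
    rename_i c
    refine ⟨{c}, by simp, 0, le_rfl, ?_, by simp⟩
    simp only [mul_zero]
    exact Finset.sum_nonneg fun i _ => Finset.sum_nonneg fun j _ => mul_nonneg (hnn i j) (sq_nonneg _)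
  | cons hadj p ih =>
    rename_i a v b
    rw [SimpleGraph.Walk.cons_isPath_iff] at hp
    obtain ⟨S, hS, Y, hY, h1, h2⟩ := ih hp.1
    have haS : a ∉ S := by rw [hS]; exact hp.2
    have hvS : v ∈ S := by rw [hS]; simp
    have hwav : wmin ≤ w a v := by
      rw [SimpleGraph.fromRel_adj] at hadj
      rcases hadj.2 with h | h
      · exact hw _ _ h
      · rw [hsym]; exact hw _ _ h
    refine ⟨insert a S, by simp [hS], (u a + u v) ^ 2 + Y, by positivity, ?_, ?_⟩
    · have nn : ∀ i j, 0 ≤ w i j * (u i + u j) ^ 2 := fun i j => mul_nonneg (hnn i j) (sq_nonneg _)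
      rw [Finset.sum_insert haS, Finset.sum_insert haS]
      have e : ∑ i ∈ S, ∑ j ∈ insert a S, w i j * (u i + u j) ^ 2
          = ∑ i ∈ S, w i a * (u i + u a) ^ 2 + ∑ i ∈ S, ∑ j ∈ S, w i j * (u i + u j) ^ 2 := by
        rw [← Finset.sum_add_distrib]
        exact Finset.sum_congr rfl fun i _ => Finset.sum_insert haS
      rw [e]
      have e1 : w a v * (u a + u v) ^ 2 ≤ ∑ j ∈ S, w a j * (u a + u j) ^ 2 :=
        Finset.single_le_sum (f := fun j => w a j * (u a + u j) ^ 2) (fun j _ => nn a j) hvS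
      have e2 : w v a * (u v + u a) ^ 2 ≤ ∑ i ∈ S, w i a * (u i + u a) ^ 2 :=
        Finset.single_le_sum (f := fun i => w i a * (u i + u a) ^ 2) (fun i _ => nn i a) hvS
      have e3 : wmin * (u a + u v) ^ 2 ≤ w a v * (u a + u v) ^ 2 := by gcongr
      rw [hsym v a, add_comm (u v)] at e2
      have := nn a a
      linarith
    · have := aux_cs (|u a| - |u v|) (|u v| - |u b|) p.length Y ((u a + u v) ^ 2) (by positivity)
        (by
          rw [sq_le_sq]
          have := abs_abs_sub_abs_le_abs_sub (u a) (-u v)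
          simpa using this) hY h2
      rw [SimpleGraph.Walk.length_cons]
      push_cast
      simpa using this

/-- Proposition 56.
If `u` is an eigenfunction for the largest eigenvalue, normalized by `max_i |u(i)| = 1`,
then `λ_{N-1} ≤ 2 - w_min (1 - min_i |u(i)|)² / (D · vol(V))`, where `w_min` is the smallest
positive edge weight and `D` is the diameter; in particular if `u` vanishes somewhere, then
`λ_{N-1} ≤ 2 - w_min / (D · vol(V))`. -/
theorem largest_eigenvalue_le_of_normalized_eigenfunction
    [Nonempty V] (w : V → V → ℝ)
    (hsym : ∀ i j, w i j = w j i) (hnn : ∀ i j, 0 ≤ w i j)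
    (hdeg : ∀ i, 0 < deg w i) (hconn : Conn w) (hN : 2 ≤ Fintype.card V)
    (lam : ℝ) (u : V → ℝ) (hu : u ≠ 0) (heig : ∀ i, lap w u i = lam * u i)
    (hmax : ∀ μ, IsEigen w μ → μ ≤ lam)
    (hnorm : Finset.univ.sup' Finset.univ_nonempty (fun i => |u i|) = 1)
    (wmin D : ℝ)
    (hwmin : wmin = sInf { x : ℝ | ∃ i j : V, 0 < w i j ∧ x = w i j })
    (hD : D = sSup { x : ℝ | ∃ i j : V,
        x = (((SimpleGraph.fromRel fun a b => 0 < w a b).dist i j : ℕ) : ℝ) }) :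
    lam ≤ 2 - wmin * (1 - Finset.univ.inf' Finset.univ_nonempty (fun i => |u i|)) ^ 2 /
        (D * vol w Finset.univ) ∧
      ((∃ i, u i = 0) → lam ≤ 2 - wmin / (D * vol w Finset.univ)) := by
  have hwnn : 0 ≤ wmin := by
    rw [hwmin]
    apply Real.sInf_nonneg
    rintro x ⟨i, j, h, rfl⟩
    exact h.le
  have hw : ∀ i j, 0 < w i j → wmin ≤ w i j := by
    intro i j h
    rw [hwmin]
    refine csInf_le ⟨0, ?_⟩ ⟨i, j, h, rfl⟩
    rintro x ⟨i, j, h, rfl⟩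
    exact h.le
  have hDle : ∀ i j, ((SimpleGraph.fromRel fun a b => 0 < w a b).dist i j : ℝ) ≤ D := by
    intro i j
    rw [hD]
    refine le_csSup ?_ ⟨i, j, rfl⟩
    apply Set.Finite.bddAbove
    refine (Set.finite_range (fun p : V × V =>
      (((SimpleGraph.fromRel fun a b => 0 < w a b).dist p.1 p.2 : ℕ) : ℝ))).subset ?_
    rintro x ⟨i, j, rfl⟩
    exact ⟨(i, j), rfl⟩
  have hreach : ∀ i j, (SimpleGraph.fromRel fun a b => 0 < w a b).Reachable i j := by
    intro i j
    induction hconn i j with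
    | refl => exact SimpleGraph.Reachable.refl _
    | tail _ h ih =>
      rename_i b c _
      by_cases hbc : b = c
      · rw [← hbc]; exact ih
      · refine ih.trans (SimpleGraph.Adj.reachable ?_)
        rw [SimpleGraph.fromRel_adj]
        exact ⟨hbc, Or.inl h⟩
  have hone : ∀ i, |u i| ≤ 1 := by
    intro i
    rw [← hnorm]
    exact Finset.le_sup' (fun i => |u i|) (Finset.mem_univ i)
  have hrow : ∀ i, ∑ j, w i j * u j = (1 - lam) * (deg w i * u i) := by
    intro i
    have h := heig i
    have hd := (hdeg i).ne'
    unfold lap at h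
    field_simp at h
    linarith
  have hid : ∑ i, ∑ j, w i j * (u i + u j) ^ 2 = 2 * (2 - lam) * ∑ i, deg w i * u i ^ 2 := by
    have e1 : ∑ i, ∑ j, w i j * u i ^ 2 = ∑ i, deg w i * u i ^ 2 := by
      refine Finset.sum_congr rfl fun i _ => ?_
      rw [deg, Finset.sum_mul]
    have e2 : ∑ i, ∑ j, w i j * u j ^ 2 = ∑ i, deg w i * u i ^ 2 := by
      rw [Finset.sum_comm, ← e1]
      exact Finset.sum_congr rfl fun i _ => Finset.sum_congr rfl fun j _ => by rw [hsym]
    have e3 : ∑ i, ∑ j, w i j * (u i * u j) = (1 - lam) * ∑ i, deg w i * u i ^ 2 := by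
      rw [Finset.mul_sum]
      refine Finset.sum_congr rfl fun i _ => ?_
      have : ∑ j, w i j * (u i * u j) = u i * ∑ j, w i j * u j := by
        rw [Finset.mul_sum]
        exact Finset.sum_congr rfl fun j _ => by ring
      rw [this, hrow]; ring
    have e4 : ∑ i, ∑ j, w i j * (u i + u j) ^ 2 = ∑ i, ∑ j, w i j * u i ^ 2
        + ∑ i, ∑ j, w i j * u j ^ 2 + 2 * ∑ i, ∑ j, w i j * (u i * u j) := by
      simp only [Finset.mul_sum, ← Finset.sum_add_distrib]
      exact Finset.sum_congr rfl fun i _ => Finset.sum_congr rfl fun j _ => by ring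
    rw [e4, e1, e2, e3]; ring
  have nn : ∀ i j, 0 ≤ w i j * (u i + u j) ^ 2 := fun i j => mul_nonneg (hnn i j) (sq_nonneg _)
  have hpos : 0 < ∑ i, deg w i * u i ^ 2 := by
    obtain ⟨i, hi⟩ := Function.ne_iff.1 hu
    refine Finset.sum_pos' (fun i _ => mul_nonneg (hdeg i).le (sq_nonneg _)) ⟨i, Finset.mem_univ i, ?_⟩
    exact mul_pos (hdeg i) (by simp at hi; positivity)
  have hlam : 0 ≤ 2 - lam := by
    have h : 0 ≤ ∑ i, ∑ j, w i j * (u i + u j) ^ 2 :=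
      Finset.sum_nonneg fun i _ => Finset.sum_nonneg fun j _ => nn i j
    rw [hid] at h
    have := nonneg_of_mul_nonneg_left h hpos
    linarith
  have hvol : ∑ i, deg w i * u i ^ 2 ≤ vol w Finset.univ := by
    unfold vol
    refine Finset.sum_le_sum fun i _ => ?_
    have : u i ^ 2 ≤ 1 := by rw [sq_le_one_iff_abs_le_one]; exact hone i
    nlinarith [hdeg i]
  have hD0 : 0 ≤ D := by
    obtain ⟨i⟩ := ‹Nonempty V›
    exact le_trans (by positivity) (hDle i i)
  have key : lam ≤ 2 - wmin * (1 - Finset.univ.inf' Finset.univ_nonempty (fun i => |u i|)) ^ 2 /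
        (D * vol w Finset.univ) := by
    obtain ⟨a, -, ha⟩ := Finset.exists_mem_eq_sup' (Finset.univ_nonempty (α := V)) (fun i => |u i|)
    obtain ⟨b, -, hb⟩ := Finset.exists_mem_eq_inf' (Finset.univ_nonempty (α := V)) (fun i => |u i|)
    rw [hnorm] at ha
    rw [hb]
    obtain ⟨p, hp, hl⟩ := (hreach a b).exists_path_of_dist
    obtain ⟨S, -, Y, hY, h1, h2⟩ := aux_path w u wmin hsym hnn hwnn hw p hp
    rw [hl, ← ha] at h2
    have h3 : ∑ i ∈ S, ∑ j ∈ S, w i j * (u i + u j) ^ 2 ≤ ∑ i, ∑ j, w i j * (u i + u j) ^ 2 := by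
      refine le_trans (Finset.sum_le_sum fun i _ => Finset.sum_le_univ_sum_of_nonneg (nn i)) ?_
      exact Finset.sum_le_univ_sum_of_nonneg fun i => Finset.sum_nonneg fun j _ => nn i j
    rw [hid] at h3
    have h4 : wmin * Y ≤ (2 - lam) * vol w Finset.univ := by
      have := mul_le_mul_of_nonneg_left hvol hlam
      linarith
    have h5 : (1 - |u b|) ^ 2 ≤ D * Y := h2.trans (mul_le_mul_of_nonneg_right (hDle a b) hY)
    have h6 : wmin * (1 - |u b|) ^ 2 / (D * vol w Finset.univ) ≤ 2 - lam := by
      refine div_le_of_le_mul₀ (mul_nonneg hD0 (hpos.le.trans hvol)) hlam ?_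
      have h7 := mul_le_mul_of_nonneg_left h5 hwnn
      have h8 := mul_le_mul_of_nonneg_left h4 hD0
      linarith
    linarith
  refine ⟨key, ?_⟩
  rintro ⟨i, hi⟩
  have hm : Finset.univ.inf' Finset.univ_nonempty (fun i => |u i|) = 0 := by
    apply le_antisymm
    · have := Finset.inf'_le (fun i => |u i|) (Finset.mem_univ i)
      rwa [hi, abs_zero] at this
    · exact Finset.le_inf' _ _ fun i _ => abs_nonneg _
  rw [hm] at key
  simpa using key

end BJ
end
end

section
/- Suppose that for every vertex i ∈ V there is a closed walk σ_i in Γ from i to i consisting of an odd number of edges (each consecutive pair in the walk being joined by an edge of positive weight), and let Σ = (σ_i)_{i∈V} be this collection. Define ξ := max over edges e = (k,l) with w_{kl} > 0 of (1/w_{kl})·∑_{i : σ_i contains the edge e} d_i. Then the dual Cheeger constant satisfies h̄ ≤ 1 − 1/ξ. -/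
open Finset

noncomputable section

namespace BJ

variable {V : Type*} [Fintype V] [DecidableEq V]

lemma bad_step (A B : Finset V) (hAB : Disjoint A B) (p : ℕ → V) (n : ℕ) (hn : Odd n)
    (h0 : p 0 ∈ A) (hc : p n = p 0) :
    ∃ t < n, (p t ∈ A ∧ p (t + 1) ∉ B) ∨ (p t ∈ B ∧ p (t + 1) ∉ A) := by
  by_contra hcon
  push Not at hcon
  have key : ∀ t ≤ n, (Even t → p t ∈ A) ∧ (Odd t → p t ∈ B) := by
    intro t
    induction t with
    | zero => intro _; exact ⟨fun _ => h0, fun h => by simp at h⟩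
    | succ t ih =>
      intro ht
      have h1 := ih (by omega)
      have h2 := hcon t (by omega)
      refine ⟨fun he => ?_, fun ho => ?_⟩
      · exact h2.2 (h1.2 (by grind))
      · exact h2.1 (h1.1 (by grind))
  have h3 := (key n le_rfl).2 hn
  rw [hc] at h3
  exact Finset.disjoint_left.mp hAB h0 h3

lemma bad_weight (w : V → V → ℝ) (A B : Finset V) :
    ∑ k ∈ A, ∑ l ∈ Bᶜ, w k l = vol w A - eW w A B := by
  unfold vol eW deg
  rw [← Finset.sum_sub_distrib]
  refine Finset.sum_congr rfl fun k _ => ?_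
  rw [← Finset.sum_add_sum_compl B]
  ring

lemma single_le (f : V → V → ℝ) (hf : ∀ k l, 0 ≤ f k l) (A B : Finset V) (k l : V)
    (hk : k ∈ A) (hl : l ∈ B) : f k l ≤ ∑ k ∈ A, ∑ l ∈ B, f k l :=
  (Finset.single_le_sum (f := fun l => f k l) (fun l _ => hf k l) hl).trans
    (Finset.single_le_sum (f := fun k => ∑ l ∈ B, f k l)
      (fun k _ => Finset.sum_nonneg fun l _ => hf k l) hk)

/-- Theorem: upper bound for the dual Cheeger constant via odd closed walks.
If every vertex `i` carries a closed walk `σ_i` from `i` to `i` with an odd number of edges,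
and `ξ = max_{e=(k,l)} (1/w_kl) ∑_{i : σ_i ∋ e} d_i`, then `h̄ ≤ 1 - 1/ξ`. -/
theorem dualCheeger_le_of_odd_closed_walks
    (w : V → V → ℝ)
    (hsym : ∀ i j, w i j = w j i) (hnn : ∀ i j, 0 ≤ w i j)
    (hdeg : ∀ i, 0 < deg w i) (hconn : Conn w) (hN : 2 ≤ Fintype.card V)
    (σ : V → ℕ → V) (σlen : V → ℕ)
    (hodd : ∀ i, Odd (σlen i))
    (hstart : ∀ i, σ i 0 = i) (hend : ∀ i, σ i (σlen i) = i)
    (hstep : ∀ i, ∀ t < σlen i, 0 < w (σ i t) (σ i (t + 1)))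
    (ξ : ℝ)
    (hξ : ξ = sSup { x : ℝ | ∃ k l : V, 0 < w k l ∧
        x = (1 / w k l) * ∑ i : V,
          Set.indicator
            {i : V | ∃ t < σlen i,
              (σ i t = k ∧ σ i (t + 1) = l) ∨ (σ i t = l ∧ σ i (t + 1) = k)}
            (deg w) i }) :
    dualCheeger w ≤ 1 - 1 / ξ := by
  classical
  set S : V → V → Set V := fun k l => {i : V | ∃ t < σlen i,
              (σ i t = k ∧ σ i (t + 1) = l) ∨ (σ i t = l ∧ σ i (t + 1) = k)} with hS
  have hle : ∀ k l, ∑ i, Set.indicator (S k l) (deg w) i ≤ ξ * w k l := by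
    intro k l
    rcases (hnn k l).eq_or_lt with h | h
    · rw [← h, mul_zero]
      refine le_of_eq (Finset.sum_eq_zero fun i _ => Set.indicator_of_notMem ?_ _)
      rintro ⟨t, ht, ⟨h1, h2⟩ | ⟨h1, h2⟩⟩
      · have := hstep i t ht
        rw [h1, h2] at this
        linarith
      · have := hstep i t ht
        rw [h1, h2, hsym] at this
        linarith
    · have hx : (1 / w k l) * ∑ i, Set.indicator (S k l) (deg w) i ≤ ξ := by
        rw [hξ]
        refine le_csSup (Set.Finite.bddAbove ?_) ⟨k, l, h, rfl⟩
        refine (Set.finite_range (fun q : V × V =>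
          (1 / w q.1 q.2) * ∑ i, Set.indicator (S q.1 q.2) (deg w) i)).subset ?_
        rintro x ⟨k, l, _, rfl⟩
        exact ⟨(k, l), rfl⟩
      rwa [one_div, inv_mul_le_iff₀ h, mul_comm] at hx
  have hind : ∀ i k l, 0 ≤ Set.indicator (S k l) (deg w) i := fun i k l =>
    Set.indicator_nonneg (fun j _ => (hdeg j).le) i
  have main : ∀ V1 V2 : Finset V, V1.Nonempty → Disjoint V1 V2 →
      2 * eW w V1 V2 / (vol w V1 + vol w V2) ≤ 1 - 1 / ξ := by
    intro V1 V2 h1 hd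
    have hv1 : 0 < vol w V1 := Finset.sum_pos (fun i _ => hdeg i) h1
    have hv2 : 0 ≤ vol w V2 := Finset.sum_nonneg (fun i _ => (hdeg i).le)
    have hi : ∀ i ∈ V1 ∪ V2, deg w i ≤ ∑ k ∈ V1, ∑ l ∈ V2ᶜ, Set.indicator (S k l) (deg w) i
        + ∑ k ∈ V2, ∑ l ∈ V1ᶜ, Set.indicator (S k l) (deg w) i := by
      intro i hi
      have hb : ∃ t < σlen i, (σ i t ∈ V1 ∧ σ i (t + 1) ∉ V2) ∨
          (σ i t ∈ V2 ∧ σ i (t + 1) ∉ V1) := by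
        rcases Finset.mem_union.mp hi with h | h
        · exact bad_step V1 V2 hd (σ i) _ (hodd i) (by rwa [hstart]) (by rw [hstart, hend])
        · obtain ⟨t, ht, h⟩ := bad_step V2 V1 hd.symm (σ i) _ (hodd i)
            (by rwa [hstart]) (by rw [hstart, hend])
          exact ⟨t, ht, h.symm⟩
      obtain ⟨t, ht, h⟩ := hb
      have hm : i ∈ S (σ i t) (σ i (t + 1)) := ⟨t, ht, Or.inl ⟨rfl, rfl⟩⟩
      have he := Set.indicator_of_mem hm (deg w)
      have n1 : ∀ A B : Finset V, 0 ≤ ∑ k ∈ A, ∑ l ∈ B, Set.indicator (S k l) (deg w) i :=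
        fun A B => Finset.sum_nonneg fun k _ => Finset.sum_nonneg fun l _ => hind i k l
      rcases h with ⟨ha, hb⟩ | ⟨ha, hb⟩
      · have := single_le (fun k l => Set.indicator (S k l) (deg w) i) (hind i) V1 V2ᶜ _ _ ha
          (Finset.mem_compl.mpr hb)
        have := n1 V2 V1ᶜ
        linarith
      · have := single_le (fun k l => Set.indicator (S k l) (deg w) i) (hind i) V2 V1ᶜ _ _ ha
          (Finset.mem_compl.mpr hb)
        have := n1 V1 V2ᶜ
        linarith
    have swap : ∀ A B : Finset V,
        ∑ i ∈ V1 ∪ V2, ∑ k ∈ A, ∑ l ∈ B, Set.indicator (S k l) (deg w) i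
          ≤ ξ * ∑ k ∈ A, ∑ l ∈ B, w k l := by
      intro A B
      rw [Finset.sum_comm, Finset.mul_sum]
      refine Finset.sum_le_sum fun k _ => ?_
      rw [Finset.sum_comm, Finset.mul_sum]
      refine Finset.sum_le_sum fun l _ => le_trans ?_ (hle k l)
      exact Finset.sum_le_sum_of_subset_of_nonneg (Finset.subset_univ _)
        fun i _ _ => hind i k l
    have hB : ∀ A B : Finset V, 0 ≤ ∑ k ∈ A, ∑ l ∈ B, w k l :=
      fun A B => Finset.sum_nonneg fun k _ => Finset.sum_nonneg fun l _ => hnn k l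
    have tot := Finset.sum_le_sum hi
    rw [Finset.sum_add_distrib, Finset.sum_union hd] at tot
    change vol w V1 + vol w V2 ≤ _ at tot
    have s1 := swap V1 V2ᶜ
    have s2 := swap V2 V1ᶜ
    have b1 := hB V1 V2ᶜ
    have b2 := hB V2 V1ᶜ
    rw [bad_weight] at s1 s2 b1 b2
    rw [eW_symm w hsym V2 V1] at s2 b2
    have hv : 0 < vol w V1 + vol w V2 := by linarith
    have fin : vol w V1 + vol w V2 ≤ ξ * (vol w V1 + vol w V2 - 2 * eW w V1 V2) := by
      linarith
    have hpos : 0 < ξ := by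
      by_contra hneg
      push Not at hneg
      have := mul_nonpos_of_nonpos_of_nonneg hneg
        (by linarith : 0 ≤ vol w V1 + vol w V2 - 2 * eW w V1 V2)
      linarith
    rw [div_le_iff₀ hv]
    have h5 : (vol w V1 + vol w V2) / ξ ≤ vol w V1 + vol w V2 - 2 * eW w V1 V2 := by
      rw [div_le_iff₀ hpos]
      linarith
    have h6 : (1 - 1 / ξ) * (vol w V1 + vol w V2) =
        (vol w V1 + vol w V2) - (vol w V1 + vol w V2) / ξ := by ring
    linarith
  refine csSup_le ?_ ?_
  · obtain ⟨a, b, hab⟩ := Fintype.one_lt_card_iff.mp (by omega : 1 < Fintype.card V)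
    exact ⟨_, {a}, {b}, Finset.singleton_nonempty _, Finset.singleton_nonempty _,
      by simpa using hab, rfl⟩
  · rintro r ⟨V1, V2, h1, _, hd, rfl⟩
    exact main V1 V2 h1 hd

end BJ
end
end

section
/- Let Γ be an unweighted graph with N vertices. Then (N−1)/(N+1) ≤ 𝓡 ≤ 1, and equality holds on the left hand side if and only if Γ is a regular graph and N is odd. -/
open Finset

noncomputable section

namespace BJ

variable {V : Type*} [Fintype V] [DecidableEq V]

theorem greedy_aux (d : V → ℝ) (S : Finset V) : (∀ i ∈ S, 0 ≤ d i) → S.Nonempty →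
    ∃ U ⊆ S, ∃ T ⊆ S, ∃ k ∈ S, k ∉ T ∧ 0 ≤ 2 * ∑ i ∈ U, d i - ∑ i ∈ S, d i ∧
      2 * ∑ i ∈ U, d i - ∑ i ∈ S, d i + ∑ i ∈ T, d i ≤ d k ∧ ∀ i ∈ S \ T, d k ≤ d i := by
  induction S using Finset.induction_on_min_value d with
  | empty => intro _ h; simp at h
  | insert a S ha hmin ih =>
    intro hpos _
    rcases S.eq_empty_or_nonempty with rfl | hS
    · have h : 0 ≤ d a := hpos a (by simp)
      refine ⟨{a}, by simp, ∅, by simp, a, by simp, by simp, ?_, ?_, ?_⟩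
      · simp; linarith
      · simp; linarith
      · simp
    · obtain ⟨U, hU, T, hT, k, hk, hkT, h0, h1, h2⟩ := ih (fun i hi => hpos i (Finset.mem_insert_of_mem hi)) hS
      have haU : a ∉ U := fun h => ha (hU h)
      have haT : a ∉ T := fun h => ha (hT h)
      by_cases h : 2 * ∑ i ∈ U, d i - ∑ i ∈ S, d i < d a
      · have e : ∑ i ∈ S \ U, d i + ∑ i ∈ U, d i = ∑ i ∈ S, d i := Finset.sum_sdiff hU
        have ha' : a ∉ S \ U := by simp [ha]
        refine ⟨insert a (S \ U), Finset.insert_subset_insert _ Finset.sdiff_subset, ∅, by simp,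
          a, by simp, by simp, ?_, ?_, ?_⟩
        · rw [Finset.sum_insert ha, Finset.sum_insert ha']; linarith
        · rw [Finset.sum_insert ha, Finset.sum_insert ha', Finset.sum_empty]; linarith
        · intro i hi
          simp only [Finset.sdiff_empty, Finset.mem_insert] at hi
          rcases hi with rfl | hi
          · exact le_rfl
          · exact hmin i hi
      · refine ⟨U, hU.trans (Finset.subset_insert _ _), insert a T,
          Finset.insert_subset_insert _ hT, k, by simp [hk], ?_, ?_, ?_, ?_⟩
        · simp only [Finset.mem_insert, not_or]
          exact ⟨fun h => ha (h ▸ hk), hkT⟩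
        · rw [Finset.sum_insert ha]; linarith
        · rw [Finset.sum_insert ha, Finset.sum_insert haT]; linarith
        · intro i hi
          simp only [Finset.mem_sdiff, Finset.mem_insert, not_or] at hi
          exact h2 i (by simp only [Finset.mem_sdiff]; tauto)

theorem balance_aux (d : V → ℝ) (hd : ∀ i, 1 ≤ d i) (hd' : ∀ i, d i ≤ Fintype.card V)
    (hN : 2 ≤ Fintype.card V) :
    ∃ U : Finset V, 0 ≤ 2 * ∑ i ∈ U, d i - ∑ i, d i ∧
      (Fintype.card V : ℝ) * (2 * ∑ i ∈ U, d i - ∑ i, d i) ≤ ∑ i, d i ∧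
      ((Fintype.card V : ℝ) * (2 * ∑ i ∈ U, d i - ∑ i, d i) = ∑ i, d i → ∃ c, ∀ i, d i = c) := by
  have hne : (Finset.univ : Finset V).Nonempty := by
    rw [← Finset.card_pos, Finset.card_univ]; omega
  obtain ⟨U, -, T, -, k, -, hkT, h0, h1, h2⟩ :=
    greedy_aux d Finset.univ (fun i _ => by linarith [hd i]) hne
  refine ⟨U, h0, ?_⟩
  set x := 2 * ∑ i ∈ U, d i - ∑ i, d i with hx
  have e : ∑ i ∈ Finset.univ \ T, d i + ∑ i ∈ T, d i = ∑ i, d i :=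
    Finset.sum_sdiff (Finset.subset_univ T)
  have hT : (T.card : ℝ) ≤ ∑ i ∈ T, d i := by
    have := Finset.card_nsmul_le_sum T d 1 (fun i _ => hd i)
    simpa using this
  have hc : ((Finset.univ \ T).card : ℝ) + T.card = Fintype.card V := by
    have := Finset.card_sdiff_add_card_eq_card (Finset.subset_univ T)
    rw [Finset.card_univ] at this
    exact_mod_cast this
  have hS : ((Finset.univ \ T).card : ℝ) * d k ≤ ∑ i ∈ Finset.univ \ T, d i := by
    have := Finset.card_nsmul_le_sum (Finset.univ \ T) d (d k) h2
    simpa using this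
  have hNN : (2:ℝ) ≤ Fintype.card V := by exact_mod_cast hN
  set N : ℝ := (Fintype.card V : ℝ) with hNdef
  set t : ℝ := (T.card : ℝ) with ht
  set c : ℝ := ((Finset.univ \ T).card : ℝ) with hcdef
  have ht0 : 0 ≤ t := by positivity
  have hkN := hd' k
  have hxk : x ≤ d k - t := by linarith
  have hW : c * d k + t ≤ ∑ i, d i := by linarith
  have key : N * (d k - t) + t ≤ c * d k + t := by
    have : c = N - t := by linarith
    rw [this]; nlinarith [mul_nonneg ht0 (sub_nonneg.2 hkN)]
  have key2 : N * x ≤ N * (d k - t) := mul_le_mul_of_nonneg_left hxk (by linarith)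
  refine ⟨by linarith, fun heq => ?_⟩
  have ht00 : t = 0 := by linarith
  have hTe : T = ∅ := by
    rw [← Finset.card_eq_zero]; rw [ht] at ht00; exact_mod_cast ht00
  subst hTe
  refine ⟨d k, ?_⟩
  have hall : ∀ i ∈ (Finset.univ : Finset V), d k ≤ d i := fun i _ => h2 i (by simp)
  have hsum : ∑ i : V, d k = ∑ i, d i := by
    apply le_antisymm (Finset.sum_le_sum hall)
    rw [Finset.sum_const, Finset.card_univ, nsmul_eq_mul]
    have : N * (d k - t) = N * d k := by rw [ht00]; ring
    linarith
  have := (Finset.sum_eq_sum_iff_of_le hall).1 hsum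
  exact fun i => (this i (Finset.mem_univ i)).symm

/-- Lemma 16.
For an unweighted graph with `N` vertices, `(N-1)/(N+1) ≤ 𝓡 ≤ 1`, with equality on the
left iff the graph is regular and `N` is odd. Here
`𝓡 = max_{∅ ≠ U ⊊ V} min(vol U, vol Uᶜ)/max(vol U, vol Uᶜ)`. -/
theorem volume_balance_bounds_unweighted
    (w : V → V → ℝ)
    (hsym : ∀ i j, w i j = w j i) (h01 : ∀ i j, w i j = 0 ∨ w i j = 1)
    (hloop : ∀ i, w i i = 0) (hconn : Conn w) (hN : 2 ≤ Fintype.card V)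
    (R : ℝ)
    (hR : R = sSup { r : ℝ | ∃ U : Finset V, U.Nonempty ∧ U ≠ Finset.univ ∧
        r = min (vol w U) (vol w Uᶜ) / max (vol w U) (vol w Uᶜ) }) :
    (((Fintype.card V : ℝ) - 1) / ((Fintype.card V : ℝ) + 1) ≤ R ∧ R ≤ 1) ∧
      (((Fintype.card V : ℝ) - 1) / ((Fintype.card V : ℝ) + 1) = R ↔
        ((∃ d : ℝ, ∀ i, deg w i = d) ∧ Odd (Fintype.card V))) := by
  have hNN : (2:ℝ) ≤ Fintype.card V := by exact_mod_cast hN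
  have hw0 : ∀ i j, 0 ≤ w i j := fun i j => by rcases h01 i j with h | h <;> rw [h] <;> norm_num
  have hw1 : ∀ i j, w i j ≤ 1 := fun i j => by rcases h01 i j with h | h <;> rw [h] <;> norm_num
  have hd' : ∀ i, deg w i ≤ Fintype.card V := by
    intro i
    have := Finset.sum_le_card_nsmul Finset.univ (fun j => w i j) 1 (fun j _ => hw1 i j)
    simpa [deg] using this
  have hd : ∀ i, 1 ≤ deg w i := by
    intro i
    obtain ⟨j, hj⟩ := Fintype.exists_ne_of_one_lt_card (by omega : 1 < Fintype.card V) i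
    rcases Relation.ReflTransGen.cases_head (hconn i j) with h | ⟨c, hc, -⟩
    · exact absurd h.symm hj
    · have h1 : w i c = 1 := by
        rcases h01 i c with h | h
        · rw [h] at hc; exact absurd hc (lt_irrefl _)
        · exact h
      have := Finset.single_le_sum (f := fun j => w i j) (fun j _ => hw0 i j) (Finset.mem_univ c)
      simp only [h1] at this
      exact this
  have hvol0 : ∀ U, 0 ≤ vol w U := fun U => Finset.sum_nonneg fun i _ => by linarith [hd i]
  have hcompl : ∀ U, vol w U + vol w Uᶜ = ∑ i, deg w i := fun U => Finset.sum_add_sum_compl U _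
  have hWN : (Fintype.card V : ℝ) ≤ ∑ i, deg w i := by
    have := Finset.card_nsmul_le_sum Finset.univ (deg w) 1 (fun i _ => hd i)
    simpa using this
  set S : Set ℝ := { r : ℝ | ∃ U : Finset V, U.Nonempty ∧ U ≠ Finset.univ ∧
        r = min (vol w U) (vol w Uᶜ) / max (vol w U) (vol w Uᶜ) } with hSdef
  have hS1 : ∀ r ∈ S, r ≤ 1 := by
    rintro r ⟨U, -, -, rfl⟩
    exact div_le_one_of_le₀ min_le_max (le_max_of_le_left (hvol0 U))
  have hbdd : BddAbove S := ⟨1, hS1⟩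
  have hle : ∀ r ∈ S, r ≤ R := fun r hr => hR ▸ le_csSup hbdd hr
  obtain ⟨U, h0, h1, h2⟩ := balance_aux (deg w) hd hd' hN
  set N : ℝ := (Fintype.card V : ℝ) with hNdef
  set W : ℝ := ∑ i, deg w i with hWdef
  have hUc := hcompl U
  have hUv : ∑ i ∈ U, deg w i = vol w U := rfl
  rw [hUv] at h0 h1 h2
  have hUne : U.Nonempty := by
    rw [Finset.nonempty_iff_ne_empty]
    rintro rfl
    simp [vol] at h0
    linarith
  have hUu : U ≠ Finset.univ := by
    rintro rfl
    have : vol w Finset.univ = W := rfl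
    rw [this] at h1
    nlinarith
  have hmem : vol w Uᶜ / vol w U ∈ S := by
    refine ⟨U, hUne, hUu, ?_⟩
    rw [min_eq_right (by linarith), max_eq_left (by linarith)]
  have hUpos : 0 < vol w U := by linarith
  have hlow : (N - 1) / (N + 1) ≤ vol w Uᶜ / vol w U := by
    rw [div_le_div_iff₀ (by linarith) hUpos]
    have : vol w Uᶜ = W - vol w U := by linarith
    rw [this]; nlinarith
  refine ⟨⟨hlow.trans (hle _ hmem), ?_⟩, ?_, ?_⟩
  · rw [hR]; exact csSup_le ⟨_, hmem⟩ hS1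
  · intro heq
    have hreg : ∃ d : ℝ, ∀ i, deg w i = d := by
      apply h2
      have h3 := hle _ hmem
      rw [← heq, div_le_div_iff₀ hUpos (by linarith)] at h3
      have : vol w Uᶜ = W - vol w U := by linarith
      rw [this] at h3
      nlinarith
    refine ⟨hreg, ?_⟩
    obtain ⟨d, hdd⟩ := hreg
    by_contra hodd
    rw [Nat.not_odd_iff_even] at hodd
    obtain ⟨m, hm⟩ := hodd
    obtain ⟨A, -, hA⟩ := Finset.exists_subset_card_eq (s := (Finset.univ : Finset V)) (n := m)
      (by rw [Finset.card_univ]; omega)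
    have hAc : Aᶜ.card = m := by rw [Finset.card_compl]; omega
    have hv : vol w A = m * d := by simp [vol, hdd, hA]
    have hvc : vol w Aᶜ = m * d := by
      simp only [vol, hdd, Finset.sum_const, hAc, nsmul_eq_mul]
    have hmpos : (0:ℝ) < m := by
      have : 0 < m := by omega
      exact_mod_cast this
    have hdpos : 0 < d := by
      obtain ⟨i, -⟩ := hUne
      linarith [hd i, hdd i]
    have h1S : (1:ℝ) ∈ S := by
      refine ⟨A, ?_, ?_, ?_⟩
      · rw [← Finset.card_pos]; omega
      · rintro rfl
        rw [Finset.card_univ] at hA; omega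
      · rw [hv, hvc, min_self, max_self, div_self (by positivity)]
    have h4 := hle _ h1S
    rw [← heq, le_div_iff₀ (by linarith)] at h4
    linarith
  · rintro ⟨⟨d, hdd⟩, m, hm⟩
    apply le_antisymm (hlow.trans (hle _ hmem))
    rw [hR]
    refine csSup_le ⟨_, hmem⟩ ?_
    have hdpos : 0 < d := by
      obtain ⟨i, -⟩ := hUne
      linarith [hd i, hdd i]
    have hNm : N = 2 * m + 1 := by rw [hNdef, hm]; push_cast; ring
    rintro r ⟨A, -, -, rfl⟩
    have hcard : A.card + Aᶜ.card = 2 * m + 1 := by rw [Finset.card_add_card_compl, hm]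
    have hv : vol w A = A.card * d := by simp [vol, hdd]
    have hvc : vol w Aᶜ = Aᶜ.card * d := by
      simp only [vol, hdd, Finset.sum_const, nsmul_eq_mul]
    rw [hv, hvc]
    have gen : ∀ a b : ℕ, a ≤ m → m + 1 ≤ b →
        min ((a:ℝ) * d) (b * d) / max ((a:ℝ) * d) (b * d) ≤ (N - 1) / (N + 1) := by
      intro a b ha hb
      have ha' : (a:ℝ) ≤ m := by exact_mod_cast ha
      have hb' : (m:ℝ) + 1 ≤ b := by exact_mod_cast hb
      have hm0 : (0:ℝ) ≤ m := by positivity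
      have hab : (a:ℝ) * d ≤ b * d := mul_le_mul_of_nonneg_right (by linarith) hdpos.le
      rw [min_eq_left hab, max_eq_right hab, mul_div_mul_right _ _ hdpos.ne',
        div_le_div_iff₀ (by linarith) (by linarith), hNm]
      nlinarith [mul_le_mul_of_nonneg_right ha' (by linarith : (0:ℝ) ≤ m + 1),
        mul_le_mul_of_nonneg_left hb' hm0]
    rcases le_or_gt A.card m with h | h
    · exact gen _ _ h (by omega)
    · rw [min_comm, max_comm]
      exact gen _ _ (by omega) (by omega)


end BJ
end
end

section
/- Let l ≥ 1 and let 𝒜 ∈ [0,1] be any lower bound for the second smallest eigenvalue λ_1[l] of the normalized Laplacian Δ[l] of the neighborhood graph Γ[l], i.e. 𝒜 ≤ λ_1[l]. If l is even, then 1 − (1 − 𝒜)^{1/l} ≤ λ_1 ≤ … ≤ λ_{N−1} ≤ 1 + (1 − 𝒜)^{1/l}. If l is odd, then 1 − (1 − 𝒜)^{1/l} ≤ λ_1. -/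
open Finset

noncomputable section

namespace BJ

variable {V : Type*} [Fintype V] [DecidableEq V]

theorem wl_sum (w : V → V → ℝ) (hdeg : ∀ i, 0 < deg w i) (u : V → ℝ) (c : ℝ)
    (h : ∀ i, ∑ j, w i j * u j = c * deg w i * u i) (n : ℕ) (i : V) :
    ∑ j, wl w n i j * u j = c ^ n * deg w i * u i := by
  induction n with
  | zero => simp [wl]
  | succ n ih =>
    have h1 : ∑ j, wl w (n+1) i j * u j = ∑ k, wl w n i k / deg w k * ∑ j, w k j * u j := by
      simp only [wl, Finset.sum_mul, Finset.mul_sum]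
      rw [Finset.sum_comm]
      refine Finset.sum_congr rfl fun k _ => Finset.sum_congr rfl fun j _ => ?_
      ring
    rw [h1]
    have h2 : ∀ k, wl w n i k / deg w k * ∑ j, w k j * u j = c * (wl w n i k * u k) := by
      intro k
      rw [h k]
      have := (hdeg k).ne'
      field_simp
    simp only [h2]
    rw [← Finset.mul_sum, ih]
    ring

theorem deg_wl (w : V → V → ℝ) (hdeg : ∀ i, 0 < deg w i) (n : ℕ) (i : V) :
    deg (wl w n) i = deg w i := by
  have := wl_sum w hdeg (fun _ => 1) 1 (by intro i; simp [deg]) n i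
  simpa [deg] using this

theorem wl_nonneg (w : V → V → ℝ) (hnn : ∀ i j, 0 ≤ w i j) (hdeg : ∀ i, 0 < deg w i)
    (n : ℕ) (i j : V) : 0 ≤ wl w n i j := by
  induction n generalizing j with
  | zero =>
    simp only [wl]
    split_ifs
    · exact (hdeg i).le
    · exact le_rfl
  | succ n ih =>
    simp only [wl]
    exact Finset.sum_nonneg fun k _ => div_nonneg (mul_nonneg (ih k) (hnn k j)) (hdeg k).le

theorem lap_iff (w : V → V → ℝ) (hdeg : ∀ i, 0 < deg w i) (u : V → ℝ) (lam : ℝ) (i : V) :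
    lap w u i = lam * u i ↔ ∑ j, w i j * u j = (1 - lam) * deg w i * u i := by
  have := (hdeg i).ne'
  unfold lap
  constructor
  · intro h
    field_simp at h
    linarith
  · intro h
    rw [h]
    field_simp
    ring

theorem eig_nonneg (w : V → V → ℝ) (hnn : ∀ i j, 0 ≤ w i j) (hdeg : ∀ i, 0 < deg w i)
    (u : V → ℝ) (hu : u ≠ 0) (lam : ℝ) (h : ∀ i, lap w u i = lam * u i) : 0 ≤ lam := by
  obtain ⟨k, hk⟩ := Function.ne_iff.mp hu
  obtain ⟨i, -, hi⟩ := Finset.exists_max_image Finset.univ (fun i => |u i|) ⟨k, Finset.mem_univ k⟩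
  have hpos : 0 < |u i| := lt_of_lt_of_le (abs_pos.mpr hk) (hi k (Finset.mem_univ k))
  have h1 := (lap_iff w hdeg u lam i).mp (h i)
  have h2 : |∑ j, w i j * u j| ≤ deg w i * |u i| := by
    refine (Finset.abs_sum_le_sum_abs _ _).trans ?_
    rw [deg, Finset.sum_mul]
    refine Finset.sum_le_sum fun j _ => ?_
    rw [abs_mul, abs_of_nonneg (hnn i j)]
    exact mul_le_mul_of_nonneg_left (hi j (Finset.mem_univ j)) (hnn i j)
  rw [h1, abs_mul, abs_mul, abs_of_pos (hdeg i), mul_assoc] at h2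
  have h3 : |1 - lam| ≤ 1 := by
    have hp := mul_pos (hdeg i) hpos
    exact le_of_mul_le_mul_right (by linarith) hp
  have := (abs_le.mp h3).2
  linarith

theorem key_s14 (w : V → V → ℝ)
    (hsym : ∀ i j, w i j = w j i) (hnn : ∀ i j, 0 ≤ w i j)
    (hdeg : ∀ i, 0 < deg w i) (lam : ℝ) (hlam : IsEigen w lam) (h0 : lam ≠ 0) (l : ℕ) :
    sInf { μ : ℝ | ∃ u : V → ℝ, u ≠ 0 ∧
        (∑ i, deg (wl w l) i * u i) = 0 ∧ ∀ i, lap (wl w l) u i = μ * u i }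
      ≤ 1 - (1 - lam) ^ l := by
  have hdl : ∀ i, 0 < deg (wl w l) i := fun i => by rw [deg_wl w hdeg]; exact hdeg i
  apply csInf_le
  · refine ⟨0, ?_⟩
    rintro μ ⟨u, hu, -, h⟩
    exact eig_nonneg _ (wl_nonneg w hnn hdeg l) hdl u hu μ h
  · obtain ⟨u, hu, h⟩ := hlam
    have h' := fun i => (lap_iff w hdeg u lam i).mp (h i)
    refine ⟨u, hu, ?_, fun i => ?_⟩
    · simp only [deg_wl w hdeg]
      have e1 : ∑ i, ∑ j, w i j * u j = ∑ i, deg w i * u i := by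
        rw [Finset.sum_comm]
        refine Finset.sum_congr rfl fun j _ => ?_
        rw [deg, Finset.sum_mul]
        exact Finset.sum_congr rfl fun i _ => by rw [hsym]
      simp only [h', mul_assoc] at e1
      rw [← Finset.mul_sum] at e1
      have : lam * ∑ i, deg w i * u i = 0 := by linarith
      exact (mul_eq_zero.mp this).resolve_left h0
    · rw [lap_iff _ hdl, wl_sum w hdeg u (1 - lam) h', deg_wl w hdeg]
      ring

theorem root_bound (x B : ℝ) (hx : 0 ≤ x) (l : ℕ) (hl : 1 ≤ l) (h : x ^ l ≤ B) :
    x ≤ B ^ ((1 : ℝ) / l) := by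
  have h1 := Real.rpow_le_rpow (pow_nonneg hx l) h (by positivity : (0:ℝ) ≤ (1 : ℝ) / l)
  rwa [one_div, Real.pow_rpow_inv_natCast hx (by omega), ← one_div] at h1

/-- Theorem: eigenvalue bounds from a lower bound on `λ₁[l]`.
If `𝒜 ∈ [0,1]` is a lower bound for the second smallest eigenvalue `λ₁[l]` of the
normalized Laplacian of the neighborhood graph `Γ[l]`, then for even `l`,
`1 - (1-𝒜)^{1/l} ≤ λ₁ ≤ … ≤ λ_{N-1} ≤ 1 + (1-𝒜)^{1/l}`, and for odd `l`,
`1 - (1-𝒜)^{1/l} ≤ λ₁`. Here `λ₁` (resp. `λ_{N-1}`) is the second smallest (resp.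
largest) eigenvalue of `Δ`, and `λ₁[l]` is the smallest eigenvalue of `Δ[l]` admitting
an eigenfunction orthogonal to the constants w.r.t. the degree inner product. -/
theorem eigenvalue_bounds_from_neighborhood_lower_bound
    (w : V → V → ℝ)
    (hsym : ∀ i j, w i j = w j i) (hnn : ∀ i j, 0 ≤ w i j)
    (hdeg : ∀ i, 0 < deg w i) (hconn : Conn w) (hN : 2 ≤ Fintype.card V)
    (lam1 lamN : ℝ)
    (hlam1 : IsEigen w lam1) (hlam1pos : 0 < lam1)
    (hlam1min : ∀ μ, IsEigen w μ → μ ≠ 0 → lam1 ≤ μ)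
    (hlamN : IsEigen w lamN) (hlamNmax : ∀ μ, IsEigen w μ → μ ≤ lamN)
    (l : ℕ) (hl : 1 ≤ l)
    (lam1l : ℝ)
    (hlam1l : lam1l = sInf { μ : ℝ | ∃ u : V → ℝ, u ≠ 0 ∧
        (∑ i, deg (wl w l) i * u i) = 0 ∧ ∀ i, lap (wl w l) u i = μ * u i })
    (A : ℝ) (hA0 : 0 ≤ A) (hA1 : A ≤ 1) (hAle : A ≤ lam1l) :
    (Even l →
        1 - (1 - A) ^ ((1 : ℝ) / l) ≤ lam1 ∧ lamN ≤ 1 + (1 - A) ^ ((1 : ℝ) / l)) ∧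
      (Odd l → 1 - (1 - A) ^ ((1 : ℝ) / l) ≤ lam1) := by
  have k1 := key_s14 w hsym hnn hdeg lam1 hlam1 hlam1pos.ne' l
  have kN := key_s14 w hsym hnn hdeg lamN hlamN (by have := hlamNmax _ hlam1; linarith) l
  rw [← hlam1l] at k1 kN
  have hlow : 1 - (1 - A) ^ ((1 : ℝ) / l) ≤ lam1 := by
    rcases le_total 0 (1 - lam1) with hx | hx
    · have := root_bound (1 - lam1) (1 - A) hx l hl (by linarith)
      linarith
    · have : 0 ≤ (1 - A) ^ ((1 : ℝ) / l) := Real.rpow_nonneg (by linarith) _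
      linarith
  refine ⟨fun he => ⟨hlow, ?_⟩, fun _ => hlow⟩
  have := root_bound |1 - lamN| (1 - A) (abs_nonneg _) l hl (by rw [he.pow_abs]; linarith)
  have h2 := neg_abs_le (1 - lamN)
  linarith

end BJ
end
end
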